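/- arXiv:1503.07398 — 2 statements merged into one kernel-verified Lean document; each statement's English description precedes it below -/
import Mathlib

section
/- If D is a symmetric regular operator on a Hilbert B-module E, then the graded exterior product D ⊠̂ ∂^min_x is a symmetric regular operator on E ⊗ L²[0,1] whose adjoint is the closure of D* ⊠̂ ∂^max_x. -/
/-!
Core framework for unbounded KK-theory following Deeley–Goffeng–Mesland,
"The bordism group of unbounded KK-cycles".

We model Hilbert C*-modules over a C*-algebra `B` as bundled structures, and
(unbounded) regular operators via their graphs.
-/

noncomputable section

namespace UKK

open Complex

/-- A (right) Hilbert C*-module over a C*-algebra `B`, bundled together with its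
`B`-valued inner product and right `B`-action. -/
structure HilbMod (B : Type) [NonUnitalCStarAlgebra B] : Type 1 where
  carrier : Type
  [nacg : NormedAddCommGroup carrier]
  [nsc : NormedSpace ℂ carrier]
  [cs : CompleteSpace carrier]
  /-- the right action of `B` -/
  smulB : carrier → B → carrier
  /-- the `B`-valued inner product -/
  inner : carrier → carrier → B
  inner_add_right : ∀ x y z : carrier, inner x (y + z) = inner x y + inner x z
  inner_smul_right : ∀ (x : carrier) (c : ℂ) (y : carrier), inner x (c • y) = c • inner x y
  inner_smulB_right : ∀ (x y : carrier) (b : B), inner x (smulB y b) = inner x y * b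
  star_inner : ∀ x y : carrier, star (inner x y) = inner y x
  norm_sq_eq : ∀ x : carrier, ‖x‖ ^ 2 = ‖inner x x‖
  norm_inner_le : ∀ x y : carrier, ‖inner x y‖ ≤ ‖x‖ * ‖y‖
  add_smulB : ∀ (x y : carrier) (b : B), smulB (x + y) b = smulB x b + smulB y b
  smulB_add : ∀ (x : carrier) (b₁ b₂ : B), smulB x (b₁ + b₂) = smulB x b₁ + smulB x b₂
  smulB_mul : ∀ (x : carrier) (b₁ b₂ : B), smulB x (b₁ * b₂) = smulB (smulB x b₁) b₂
  smul_smulB : ∀ (c : ℂ) (x : carrier) (b : B), smulB (c • x) b = c • smulB x b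

attribute [instance] HilbMod.nacg HilbMod.nsc HilbMod.cs

variable {B : Type} [NonUnitalCStarAlgebra B]

/-- A bounded adjointable (`B`-linear) operator between Hilbert `B`-modules. -/
structure Adj (E F : HilbMod B) where
  toFun : E.carrier →L[ℂ] F.carrier
  adjFun : F.carrier →L[ℂ] E.carrier
  map_smulB : ∀ x b, toFun (E.smulB x b) = F.smulB (toFun x) b
  adj_map_smulB : ∀ y b, adjFun (F.smulB y b) = E.smulB (adjFun y) b
  inner_adj : ∀ x y, F.inner (toFun x) y = E.inner x (adjFun y)

/-- The graph of a (possibly unbounded) `B`-linear operator `E ⇢ F`: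
a `ℂ`-submodule of `E × F` which is `B`-invariant and single-valued. -/
def IsOperatorGraph (E F : HilbMod B) (G : Set (E.carrier × F.carrier)) : Prop :=
  (∃ S : Submodule ℂ (E.carrier × F.carrier), (S : Set (E.carrier × F.carrier)) = G) ∧
  (∀ p ∈ G, ∀ b : B, (E.smulB p.1 b, F.smulB p.2 b) ∈ G) ∧
  (∀ y : F.carrier, ((0 : E.carrier), y) ∈ G → y = 0)

/-- The domain of an operator graph. -/
def gdom {E F : HilbMod B} (G : Set (E.carrier × F.carrier)) : Set E.carrier :=
  Prod.fst '' G

/-- The graph of the adjoint operator: `(y, z) ∈ G(D*)` iff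
`⟪Dx, y⟫ = ⟪x, z⟫` for all `(x, Dx) ∈ G(D)`. -/
def adjointGraph (E F : HilbMod B) (G : Set (E.carrier × F.carrier)) :
    Set (F.carrier × E.carrier) :=
  {q | ∀ p ∈ G, F.inner p.2 q.1 = E.inner p.1 q.2}

/-- A semi-regular operator: a closed densely defined operator graph with densely
defined adjoint. -/
def IsSemiRegular (E F : HilbMod B) (G : Set (E.carrier × F.carrier)) : Prop :=
  IsOperatorGraph E F G ∧ IsClosed G ∧ Dense (gdom G) ∧ Dense (gdom (adjointGraph E F G))

/-- A regular operator: a semi-regular operator such that `1 + D*D` has dense range. -/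
def IsRegular (E F : HilbMod B) (G : Set (E.carrier × F.carrier)) : Prop :=
  IsSemiRegular E F G ∧
    Dense {w : E.carrier | ∃ x y z, (x, y) ∈ G ∧ (y, z) ∈ adjointGraph E F G ∧ w = x + z}

/-- A symmetric operator: `D ⊆ D*`. -/
def IsSymmetricGraph (E : HilbMod B) (G : Set (E.carrier × E.carrier)) : Prop :=
  G ⊆ adjointGraph E E G

/-- A self-adjoint operator: `D = D*`. -/
def IsSelfAdjointGraph (E : HilbMod B) (G : Set (E.carrier × E.carrier)) : Prop :=
  adjointGraph E E G = G

/-- The sum of two operators, with domain the intersection of the domains. -/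
def sumGraph (E F : HilbMod B) (G₁ G₂ : Set (E.carrier × F.carrier)) :
    Set (E.carrier × F.carrier) :=
  {p | ∃ y₁ y₂, (p.1, y₁) ∈ G₁ ∧ (p.1, y₂) ∈ G₂ ∧ p.2 = y₁ + y₂}

/-- Finite rank operators `z ↦ ∑ vᵢ · ⟪wᵢ, z⟫`. -/
def finiteRankSet (E F : HilbMod B) : Set (E.carrier →L[ℂ] F.carrier) :=
  {S | ∃ (n : ℕ) (v : Fin n → F.carrier) (w : Fin n → E.carrier),
    ∀ z, S z = ∑ i, F.smulB (v i) (E.inner (w i) z)}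

/-- `B`-compact operators: norm limits of finite rank operators. -/
def IsCompactOp (E F : HilbMod B) (T : E.carrier →L[ℂ] F.carrier) : Prop :=
  T ∈ closure (finiteRankSet E F)

/-- `C` is a bounded adjointable extension of the commutator `[D, T]`,
and `T` preserves the domain of `D`.  This says `T ∈ Lip(D)` with commutator `C`. -/
def IsLipFor (E : HilbMod B) (G : Set (E.carrier × E.carrier)) (T C : Adj E E) : Prop :=
  ∀ p ∈ G, ∃ y', (T.toFun p.1, y') ∈ G ∧ C.toFun p.1 = y' - T.toFun p.2

/-- Membership in the Lipschitz algebra `Lip(D)` of the operator with graph `G`. -/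
def MemLip (E : HilbMod B) (G : Set (E.carrier × E.carrier)) (T : Adj E E) : Prop :=
  ∃ C : Adj E E, IsLipFor E G T C

/-- A *-representation of a C*-algebra `A` by adjointable operators on a
Hilbert `B`-module. -/
structure RepOn (A : Type) [NonUnitalCStarAlgebra A] {B : Type} [NonUnitalCStarAlgebra B]
    (E : HilbMod B) where
  π : A → Adj E E
  π_add : ∀ a₁ a₂ x, (π (a₁ + a₂)).toFun x = (π a₁).toFun x + (π a₂).toFun x
  π_mul : ∀ a₁ a₂ x, (π (a₁ * a₂)).toFun x = (π a₁).toFun ((π a₂).toFun x)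
  π_smul : ∀ (c : ℂ) a x, (π (c • a)).toFun x = c • (π a).toFun x
  π_star : ∀ a, (π (star a)).toFun = (π a).adjFun

/-- A grading operator (a self-adjoint adjointable involution) on a Hilbert module. -/
structure GradingOf (E : HilbMod B) where
  γ : Adj E E
  invol : ∀ x, γ.toFun (γ.toFun x) = x
  selfadj : γ.adjFun = γ.toFun

/-- A dense *-subalgebra `𝒜 ⊆ A`, equipped with a (locally convex) topology finer
than the C*-topology. -/
structure DenseSub (A : Type) [NonUnitalCStarAlgebra A] where
  alg : NonUnitalStarSubalgebra ℂ A
  dense : Dense (alg : Set A)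
  top : TopologicalSpace alg
  cont : @Continuous _ _ top _ (Subtype.val : alg → A)

variable {A : Type} [NonUnitalCStarAlgebra A]

/-- The conditions of an `(𝒜,B)`-chain: a regular operator `D` (odd when graded),
with `A` acting by even operators, such that the representation restricts to a
continuous homomorphism `𝒜 → Lip(D)`. -/
def IsChainOn (𝓐 : DenseSub A) (E : HilbMod B) (ρ : RepOn A E) (gr : Option (GradingOf E))
    (G : Set (E.carrier × E.carrier)) : Prop :=
  IsRegular E E G ∧
  (∀ g, gr = some g →
    (∀ (a : A) x, g.γ.toFun ((ρ.π a).toFun x) = (ρ.π a).toFun (g.γ.toFun x)) ∧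
    (∀ p ∈ G, (g.γ.toFun p.1, -(g.γ.toFun p.2)) ∈ G)) ∧
  (∃ Λ : 𝓐.alg → Adj E E,
    (∀ a : 𝓐.alg, IsLipFor E G (ρ.π (a : A)) (Λ a)) ∧
    @Continuous _ _ 𝓐.top _
      (fun a : 𝓐.alg => (((ρ.π (a : A)).toFun : E.carrier →L[ℂ] E.carrier), (Λ a).toFun)))

/-- Local compactness of the resolvents `π(a)(D ± i)⁻¹`. -/
def HasLocallyCompactResolvent (E : HilbMod B) (ρ : RepOn A E)
    (G : Set (E.carrier × E.carrier)) : Prop :=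
  ∀ (a : A) (s : ℝ), s = 1 ∨ s = -1 →
    ∃ C : E.carrier →L[ℂ] E.carrier, IsCompactOp E E C ∧
      ∀ p ∈ G, C (p.2 + ((s : ℂ) * Complex.I) • p.1) = (ρ.π a).toFun p.1

/-- The conditions of a closed `(𝒜,B)`-cycle. -/
def IsCycleOn (𝓐 : DenseSub A) (E : HilbMod B) (ρ : RepOn A E) (gr : Option (GradingOf E))
    (G : Set (E.carrier × E.carrier)) : Prop :=
  IsChainOn 𝓐 E ρ gr G ∧ IsSelfAdjointGraph E G ∧ HasLocallyCompactResolvent E ρ G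

/-- The conditions of a symmetric `(𝒜,B)`-chain. -/
def IsSymmetricChainOn (𝓐 : DenseSub A) (E : HilbMod B) (ρ : RepOn A E)
    (gr : Option (GradingOf E)) (G : Set (E.carrier × E.carrier)) : Prop :=
  IsChainOn 𝓐 E ρ gr G ∧ IsSymmetricGraph E G

/-- A closed `(𝒜,B)`-cycle. -/
structure KKCycle (𝓐 : DenseSub A) (B : Type) [NonUnitalCStarAlgebra B] : Type 1 where
  E : HilbMod B
  ρ : RepOn A E
  gr : Option (GradingOf E)
  G : Set (E.carrier × E.carrier)
  is : IsCycleOn 𝓐 E ρ gr G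

/-- A symmetric `(𝒜,B)`-chain. -/
structure SChain (𝓐 : DenseSub A) (B : Type) [NonUnitalCStarAlgebra B] : Type 1 where
  E : HilbMod B
  ρ : RepOn A E
  gr : Option (GradingOf E)
  G : Set (E.carrier × E.carrier)
  is : IsSymmetricChainOn 𝓐 E ρ gr G

/-- A unitary isomorphism of Hilbert `B`-modules. -/
structure UIso (E F : HilbMod B) where
  u : Adj E F
  linv : ∀ x, u.adjFun (u.toFun x) = x
  rinv : ∀ y, u.toFun (u.adjFun y) = y

/-- A decomposition of `E` as the direct sum of `E₁` and `E₂`, given by a pair of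
isometric embeddings with orthogonal ranges and dense total range. -/
structure SumDecomp (E E₁ E₂ : HilbMod B) where
  j₁ : Adj E₁ E
  j₂ : Adj E₂ E
  isom₁ : ∀ x y, E.inner (j₁.toFun x) (j₁.toFun y) = E₁.inner x y
  isom₂ : ∀ x y, E.inner (j₂.toFun x) (j₂.toFun y) = E₂.inner x y
  orth : ∀ x y, E.inner (j₁.toFun x) (j₂.toFun y) = 0
  total : Dense {z : E.carrier | ∃ x y, z = j₁.toFun x + j₂.toFun y}

/-- `c` is (isomorphic to) the direct sum of the cycles `c₁` and `c₂`. -/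
def IsSumOf {𝓐 : DenseSub A} (c c₁ c₂ : KKCycle 𝓐 B) : Prop :=
  ∃ d : SumDecomp c.E c₁.E c₂.E,
    (∀ (a : A) x, (c.ρ.π a).toFun (d.j₁.toFun x) = d.j₁.toFun ((c₁.ρ.π a).toFun x)) ∧
    (∀ (a : A) x, (c.ρ.π a).toFun (d.j₂.toFun x) = d.j₂.toFun ((c₂.ρ.π a).toFun x)) ∧
    (c.G = {pr | ∃ p₁ ∈ c₁.G, ∃ p₂ ∈ c₂.G,
        pr = (d.j₁.toFun p₁.1 + d.j₂.toFun p₂.1, d.j₁.toFun p₁.2 + d.j₂.toFun p₂.2)}) ∧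
    (c.gr.isSome = c₁.gr.isSome ∧ c.gr.isSome = c₂.gr.isSome) ∧
    (∀ g g₁, c.gr = some g → c₁.gr = some g₁ →
      ∀ x, g.γ.toFun (d.j₁.toFun x) = d.j₁.toFun (g₁.γ.toFun x)) ∧
    (∀ g g₂, c.gr = some g → c₂.gr = some g₂ →
      ∀ x, g.γ.toFun (d.j₂.toFun x) = d.j₂.toFun (g₂.γ.toFun x))

/-- `c'` is (isomorphic to) the inverse `-c` of the cycle `c`: for odd cycles the
sign of the operator is reversed, for even cycles the grading is reversed. -/
def IsNegOf {𝓐 : DenseSub A} (c' c : KKCycle 𝓐 B) : Prop :=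
  ∃ u : UIso c.E c'.E,
    (∀ (a : A) x, u.u.toFun ((c.ρ.π a).toFun x) = (c'.ρ.π a).toFun (u.u.toFun x)) ∧
    ((c.gr = none ∧ c'.gr = none ∧
        ∀ pr : c.E.carrier × c.E.carrier,
          pr ∈ c.G ↔ (u.u.toFun pr.1, -u.u.toFun pr.2) ∈ c'.G) ∨
     (∃ g g', c.gr = some g ∧ c'.gr = some g' ∧
        (∀ pr : c.E.carrier × c.E.carrier,
          pr ∈ c.G ↔ (u.u.toFun pr.1, u.u.toFun pr.2) ∈ c'.G) ∧
        ∀ x, u.u.toFun (g.γ.toFun x) = -(g'.γ.toFun (u.u.toFun x))))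

/-- Isomorphism of cycles. -/
def CycleIso {𝓐 : DenseSub A} (c c' : KKCycle 𝓐 B) : Prop :=
  ∃ u : UIso c.E c'.E,
    (∀ (a : A) x, u.u.toFun ((c.ρ.π a).toFun x) = (c'.ρ.π a).toFun (u.u.toFun x)) ∧
    (∀ pr : c.E.carrier × c.E.carrier,
      pr ∈ c.G ↔ (u.u.toFun pr.1, u.u.toFun pr.2) ∈ c'.G) ∧
    (c.gr = none ↔ c'.gr = none) ∧
    (∀ g g', c.gr = some g → c'.gr = some g' →
      ∀ x, u.u.toFun (g.γ.toFun x) = g'.γ.toFun (u.u.toFun x))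

/-! ### Function classes on the interval -/

/-- `C^∞_c(0,1]`: smooth functions vanishing near `0`. -/
def SmoothVan0 (φ : ℝ → ℂ) : Prop :=
  ContDiff ℝ (⊤ : ℕ∞) φ ∧ ∃ ε > (0 : ℝ), ∀ t ≤ ε, φ t = 0

/-- `C^∞_c(0,1)`: smooth functions vanishing near `0` and near `1`. -/
def SmoothVan01 (φ : ℝ → ℂ) : Prop :=
  SmoothVan0 φ ∧ ∃ ε > (0 : ℝ), ∀ t, 1 - ε ≤ t → φ t = 0

/-- `C¹₀((0,1]) `: `C¹` functions with `φ(0) = 0` and `φ'(0) = 0`. -/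
def C1Van0 (φ : ℝ → ℂ) : Prop :=
  ContDiff ℝ 1 φ ∧ φ 0 = 0 ∧ deriv φ 0 = 0

/-! ### Boundary data and Hilsum bordisms -/

/-- Boundary data `(θ, p)` for a closed cycle `c = (E, D)` relative to a symmetric
chain `Fc = (F, Q)`, together with a model `L` of the cylinder `L²[0,1] ⊗̂ E`
(with its `C[0,1]`-action `mult`, its `A`-action `ρL` and the operator `Ψ(D)`,
whose graph is `PsiG`). -/
structure BoundaryData {𝓐 : DenseSub A} (Fc : SChain 𝓐 B) (c : KKCycle 𝓐 B) where
  L : HilbMod B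
  ρL : RepOn A L
  mult : (ℝ → ℂ) → Adj L L
  mult_mul : ∀ φ ψ : ℝ → ℂ, Continuous φ → Continuous ψ →
    ∀ x, (mult (fun t => φ t * ψ t)).toFun x = (mult φ).toFun ((mult ψ).toFun x)
  mult_add : ∀ φ ψ : ℝ → ℂ, Continuous φ → Continuous ψ →
    ∀ x, (mult (fun t => φ t + ψ t)).toFun x = (mult φ).toFun x + (mult ψ).toFun x
  mult_star : ∀ φ : ℝ → ℂ, Continuous φ →
    (mult (fun t => (starRingEnd ℂ) (φ t))).toFun = (mult φ).adjFun
  mult_comm_rep : ∀ (φ : ℝ → ℂ) (a : A) x,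
    (mult φ).toFun ((ρL.π a).toFun x) = (ρL.π a).toFun ((mult φ).toFun x)
  /-- the chain has complementary parity to the cycle -/
  parity : Fc.gr.isSome ↔ c.gr = none
  /-- the graph of the operator `Ψ(D)` on the cylinder -/
  PsiG : Set (L.carrier × L.carrier)
  psi_symm : IsSymmetricGraph L PsiG
  psi_semireg : IsSemiRegular L L PsiG
  /-- the projection `p` -/
  p : Adj Fc.E Fc.E
  p_idem : ∀ x, p.toFun (p.toFun x) = p.toFun x
  p_sa : p.adjFun = p.toFun
  p_comm : ∀ (a : A) x, p.toFun ((Fc.ρ.π a).toFun x) = (Fc.ρ.π a).toFun (p.toFun x)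
  /-- the isomorphism `θ : pF ≅ L²[0,1] ⊗̂ E`, as a coisometry on `F` with
  `θ*θ = p`. -/
  θ : Adj Fc.E L
  θ_p : ∀ x, θ.toFun (p.toFun x) = θ.toFun x
  θ_coisom : ∀ z, θ.toFun (θ.adjFun z) = z
  θ_isom : ∀ x, θ.adjFun (θ.toFun x) = p.toFun x
  θ_rep : ∀ (a : A) x, θ.toFun ((Fc.ρ.π a).toFun x) = (ρL.π a).toFun (θ.toFun x)

namespace BoundaryData

variable {𝓐 : DenseSub A} {Fc : SChain 𝓐 B} {c : KKCycle 𝓐 B}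

/-- The operator `b(φ) = θ (φ ⊗ 1) θ⁻¹ p + φ(1)(1-p)` on `F`. -/
def bop0 (d : BoundaryData Fc c) (φ : ℝ → ℂ) (x : Fc.E.carrier) : Fc.E.carrier :=
  d.θ.adjFun ((d.mult φ).toFun (d.θ.toFun x)) + φ 1 • (x - d.p.toFun x)

/-- The operator `b(φ ⊗ a)` on `F`. -/
def bopA (d : BoundaryData Fc c) (φ : ℝ → ℂ) (a : A) (x : Fc.E.carrier) : Fc.E.carrier :=
  d.bop0 φ ((Fc.ρ.π a).toFun x)

/-- Hilsum's boundary conditions: `c` is a boundary of the symmetric chain `Fc`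
with boundary data `(θ, p)`. -/
def IsBoundaryOf (d : BoundaryData Fc c) : Prop :=
  (∀ φ : ℝ → ℂ, SmoothVan0 φ →
    ∀ x ∈ gdom (adjointGraph Fc.E Fc.E Fc.G), d.bop0 φ x ∈ gdom Fc.G) ∧
  (∀ φ : ℝ → ℂ, SmoothVan01 φ →
    ((fun z => (d.mult φ).toFun z) '' gdom d.PsiG
        = (fun x => d.θ.toFun (d.bop0 φ x)) '' gdom Fc.G) ∧
    (∀ x w, x ∈ gdom Fc.G → (d.bop0 φ x, w) ∈ Fc.G →
      (d.θ.toFun (d.bop0 φ x), d.θ.toFun w) ∈ d.PsiG)) ∧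
  (∀ φ₁ φ₂ : ℝ → ℂ, ContDiff ℝ (⊤ : ℕ∞) φ₁ → ContDiff ℝ (⊤ : ℕ∞) φ₂ →
    (∀ t ∈ Set.Icc (0 : ℝ) 1, φ₁ t * φ₂ t = 0) →
    ∀ x w, (d.bop0 φ₂ x, w) ∈ Fc.G → d.bop0 φ₁ w = 0)

/-- `(Fc, Q, θ, p)` is a bordism: the boundary conditions hold, and the induced
symmetric `(C¹₀((0,1],𝒜), B)`-chain is half-closed. -/
def IsBordism (d : BoundaryData Fc c) : Prop :=
  d.IsBoundaryOf ∧
  (∀ φ : ℝ → ℂ, C1Van0 φ → ∀ a : 𝓐.alg,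
    (∃ T C : Adj Fc.E Fc.E, (∀ x, T.toFun x = d.bopA φ (a : A) x) ∧ IsLipFor Fc.E Fc.G T C) ∧
    (∀ x ∈ gdom (adjointGraph Fc.E Fc.E Fc.G), d.bopA φ (a : A) x ∈ gdom Fc.G) ∧
    (∃ K : Fc.E.carrier →L[ℂ] Fc.E.carrier, IsCompactOp Fc.E Fc.E K ∧
      ∀ x y z, (x, y) ∈ Fc.G → (y, z) ∈ adjointGraph Fc.E Fc.E Fc.G →
        K (x + z) = d.bopA φ (a : A) x))

end BoundaryData

/-- A closed cycle is nullbordant when it is the boundary of a bordism. -/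
def Nullbordant {𝓐 : DenseSub A} (c : KKCycle 𝓐 B) : Prop :=
  ∃ (Fc : SChain 𝓐 B) (d : BoundaryData Fc c), d.IsBordism

/-- Hilsum's bordism relation: `c₁ ∼_bor c₂` iff `c₁ + (-c₂)` is nullbordant. -/
def Bordant {𝓐 : DenseSub A} (c₁ c₂ : KKCycle 𝓐 B) : Prop :=
  ∃ n₂ s : KKCycle 𝓐 B, IsNegOf n₂ c₂ ∧ IsSumOf s c₁ n₂ ∧ Nullbordant s

/-- The bordism group `Ω_*(𝒜, B)` (as a set of bordism classes). -/
def Omega (𝓐 : DenseSub A) (B : Type) [NonUnitalCStarAlgebra B] : Type 1 :=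
  Quot (fun c c' : KKCycle 𝓐 B => Bordant c c')

end UKK

end

namespace UKK

noncomputable section

variable {B : Type} [NonUnitalCStarAlgebra B]

/-- The graph of the graded exterior product `D ⊠̂ ∂^min_x` on elementary tensors
`ξ ⊗ φ` with `φ ∈ C^∞_c(0,1)` (a core for `H¹₀[0,1]`) and `ξ ∈ Dom D`:
`(D ⊠̂ ∂^min)(ξ ⊗ φ) = iγ(Dξ) ⊗ φ + γξ ⊗ iφ'`.
Here `L` is a model of the exterior tensor product `E ⊗ L²[0,1]` with elementary
vectors given by `embV`. -/
def minProdCore (E L : HilbMod B) (g : GradingOf E) (GD : Set (E.carrier × E.carrier))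
    (embV : (ℝ → E.carrier) → L.carrier) : Set (L.carrier × L.carrier) :=
  {z | ∃ (φ : ℝ → ℂ) (ξ η : E.carrier), SmoothVan01 φ ∧ (ξ, η) ∈ GD ∧
    z = (embV (fun t => φ t • ξ),
         embV (fun t => (Complex.I * φ t) • g.γ.toFun η
            + (Complex.I * deriv φ t) • g.γ.toFun ξ))}

/-- The graph of `D* ⊠̂ ∂^max_x` on elementary tensors `ξ ⊗ φ` with `φ` smooth
(a core for `H¹[0,1]`) and `ξ ∈ Dom D*`. -/
def maxProdCore (E L : HilbMod B) (g : GradingOf E) (GD : Set (E.carrier × E.carrier))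
    (embV : (ℝ → E.carrier) → L.carrier) : Set (L.carrier × L.carrier) :=
  {z | ∃ (φ : ℝ → ℂ) (ξ η : E.carrier), ContDiff ℝ (⊤ : ℕ∞) φ ∧ (ξ, η) ∈ adjointGraph E E GD ∧
    z = (embV (fun t => φ t • ξ),
         embV (fun t => (Complex.I * φ t) • g.γ.toFun η
            + (Complex.I * deriv φ t) • g.γ.toFun ξ))}

/-!
Let `S` and `T` be the closures of `D ⊠̂ ∂^min` and `D* ⊠̂ ∂^max`. Integration by parts gives
`S ⊆ T ⊆ S*`, and everything follows once `1 + T S` has dense range: for `(y, z) ∈ S*` and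
`(v, z') ∈ T` with `v` close to `y`, solving `(1 + T S) x = z' - z` produces an element of `T` close
to `(y, z)`, so that `T = S*`.

The functions `sin (n π t)` span a dense subspace of `L²[0,1]` and vanish at the end points, and
`(1 + T S) (sin (n π t) ⊗ η) = sin (n π t) ⊗ (1 + n²π² + D*D) η`. Hence the range is dense because
`μ + D*D` is surjective for `μ ≥ 1`, which the continuity method derives from the case `μ = 1`.

The a priori estimates behind both steps need `‖⟪x, x⟫‖ ≤ ‖⟪x, x⟫ + ⟪y, y⟫‖`, which `HilbMod` does
not postulate. It holds in `E ⊗ L²[0,1]`, since two functions can be squeezed into disjoint halves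
of the interval, where they become orthogonal.
-/

section

open Filter Set Topology Function MeasureTheory
open scoped NNReal ComplexConjugate ContDiff Real

section ContinuityMethod

variable {𝕜 X Y P : Type*} [NontriviallyNormedField 𝕜]
  [NormedAddCommGroup X] [NormedSpace 𝕜 X] [CompleteSpace X]
  [NormedAddCommGroup Y] [NormedSpace 𝕜 Y] [CompleteSpace Y] {K : ℝ≥0}

theorem surjective_of_nnnorm_sub_lt {A A' : X →L[𝕜] Y} (hA : AntilipschitzWith K A)
    (hsurj : Surjective A) (h : K * ‖A' - A‖₊ < 1) : Surjective A' := by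
  let e : X ≃L[𝕜] Y := .ofBijective A (LinearMap.ker_eq_bot.2 hA.injective)
    (LinearMap.range_eq_top.2 hsurj)
  have happrox : ApproximatesLinearOn A' (e : X →L[𝕜] Y) univ ‖A' - A‖₊ := fun x _ y _ => by
    have heq : A' x - A' y - A (x - y) = (A' - A) (x - y) := by
      rw [sub_apply, map_sub A']
    exact heq ▸ (A' - A).le_opNorm (x - y)
  have hsymm : ‖(e.symm : Y →L[𝕜] X)‖₊ ≤ K :=
    ContinuousLinearMap.opNorm_le_bound _ K.2 fun y => by
      simpa [e] using ContinuousLinearMap.bound_of_antilipschitz A hA (e.symm y)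
  refine happrox.surjective (e.subsingleton_or_nnnorm_symm_pos.imp_right fun hpos => ?_)
  rw [NNReal.lt_inv_iff_mul_lt hpos.ne', mul_comm]
  exact (mul_le_mul_left hsymm _).trans_lt h

theorem surjective_of_isPreconnected [TopologicalSpace P] {s : Set P} (hs : IsPreconnected s)
    {A : P → X →L[𝕜] Y} (hcont : ContinuousOn A s) (hA : ∀ p ∈ s, AntilipschitzWith K (A p))
    {p q : P} (hp : p ∈ s) (hq : q ∈ s) (hsurj : Surjective (A p)) : Surjective (A q) := by
  refine hs.induction₂' (fun p q => Surjective (A p) → Surjective (A q)) (fun p hp => ?_)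
    (fun _ _ _ _ _ _ hxy hyz => hyz ∘ hxy) hp hq hsurj
  have hnear : ∀ᶠ q in 𝓝[s] p, K * ‖A q - A p‖₊ < 1 := by
    have : Tendsto (fun q => K * ‖A q - A p‖₊) (𝓝[s] p) (𝓝 0) := by
      simpa using ((hcont p hp).sub_const (A p)).nnnorm.const_mul K
    exact this.eventually_lt_const one_pos
  filter_upwards [hnear, self_mem_nhdsWithin] with q hpq hq
  exact ⟨fun h => surjective_of_nnnorm_sub_lt (hA p hp) h hpq,
    fun h => surjective_of_nnnorm_sub_lt (hA q hq) h (by rwa [← nnnorm_neg, neg_sub])⟩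

end ContinuityMethod

namespace HilbMod

variable (E : HilbMod B)

lemma inner_add_left (x y z : E.carrier) : E.inner (x + y) z = E.inner x z + E.inner y z := by
  rw [← E.star_inner z, E.inner_add_right, star_add, E.star_inner, E.star_inner]

lemma inner_smul_left (c : ℂ) (x y : E.carrier) :
    E.inner (c • x) y = conj c • E.inner x y := by
  rw [← E.star_inner y, E.inner_smul_right, star_smul, E.star_inner, starRingEnd_apply]

/-- The inner product as a bounded sesquilinear map. -/
def innerSL : E.carrier →L⋆[ℂ] E.carrier →L[ℂ] B :=
  LinearMap.mkContinuous₂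
    (LinearMap.mk₂'ₛₗ (starRingEnd ℂ) (RingHom.id ℂ) E.inner E.inner_add_left E.inner_smul_left
      E.inner_add_right fun c x y => E.inner_smul_right x c y)
    1 fun x y => by simpa using E.norm_inner_le x y

@[simp]
lemma innerSL_apply (x y : E.carrier) : E.innerSL x y = E.inner x y := rfl

@[simp]
lemma inner_zero_left (x : E.carrier) : E.inner 0 x = 0 := by
  rw [← innerSL_apply, map_zero, zero_apply]

lemma inner_sub_left (x y z : E.carrier) : E.inner (x - y) z = E.inner x z - E.inner y z := by
  simp only [← innerSL_apply, map_sub, sub_apply]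

@[simp]
lemma inner_neg_left (x y : E.carrier) : E.inner (-x) y = -E.inner x y := by
  simp only [← innerSL_apply, map_neg, neg_apply]

@[simp]
lemma inner_zero_right (x : E.carrier) : E.inner x 0 = 0 := map_zero (E.innerSL x)

lemma inner_sub_right (x y z : E.carrier) : E.inner x (y - z) = E.inner x y - E.inner x z :=
  map_sub (E.innerSL x) y z

@[simp]
lemma inner_neg_right (x y : E.carrier) : E.inner x (-y) = -E.inner x y := map_neg (E.innerSL x) y

variable {E}

@[fun_prop]
lemma continuous_inner {X : Type*} [TopologicalSpace X] {f h : X → E.carrier}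
    (hf : Continuous f) (hh : Continuous h) : Continuous fun t => E.inner (f t) (h t) :=
  (E.innerSL.continuous.comp hf).clm_apply hh

lemma eq_zero_of_dense_of_inner_eq_zero {s : Set E.carrier} (hs : Dense s) {x : E.carrier}
    (h : ∀ y ∈ s, E.inner y x = 0) : x = 0 := by
  have hzero : (fun y => E.inner y x) = fun _ => 0 :=
    Continuous.ext_on hs (by fun_prop) continuous_const h
  have hx : ‖x‖ ^ 2 = 0 := by rw [E.norm_sq_eq, congrFun hzero x, norm_zero]
  exact norm_eq_zero.1 (pow_eq_zero_iff two_ne_zero |>.1 hx)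

lemma norm_le_norm_add_of_inner_eq_zero {x y : E.carrier} (h : E.inner x y = 0) :
    ‖x‖ ≤ ‖x + y‖ := by
  have hyx : E.inner y x = 0 := by rw [← E.star_inner, h, star_zero]
  have hsub : ‖x - y‖ = ‖x + y‖ := by
    refine (sq_eq_sq₀ (norm_nonneg _) (norm_nonneg _)).1 ?_
    simp only [E.norm_sq_eq, inner_add_left, E.inner_add_right, inner_sub_left, inner_sub_right, h,
      hyx]
    congr 1
    abel
  have htwo : ‖(2 : ℂ) • x‖ ≤ ‖x + y‖ + ‖x - y‖ := by
    have heq : (2 : ℂ) • x = (x + y) + (x - y) := by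
      rw [two_smul]
      abel
    exact heq ▸ norm_add_le (x + y) (x - y)
  rw [norm_smul, Complex.norm_two, hsub] at htwo
  linarith

lemma norm_smulB_le (x : E.carrier) (b : B) : ‖E.smulB x b‖ ≤ ‖b‖ * ‖x‖ := by
  refine le_of_sq_le_sq ?_ (by positivity)
  have hinner : E.inner (E.smulB x b) (E.smulB x b) = star b * E.inner x x * b := by
    rw [E.inner_smulB_right, ← E.star_inner, E.inner_smulB_right, star_mul, E.star_inner]
  calc ‖E.smulB x b‖ ^ 2 = ‖star b * E.inner x x * b‖ := by rw [E.norm_sq_eq, hinner]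
    _ ≤ ‖star b‖ * ‖E.inner x x‖ * ‖b‖ := norm_mul₃_le
    _ = (‖b‖ * ‖x‖) ^ 2 := by rw [norm_star, ← E.norm_sq_eq]; ring

variable (E) in
/-- Right multiplication by `b` as a bounded operator. -/
def smulBL (b : B) : E.carrier →L[ℂ] E.carrier :=
  LinearMap.mkContinuous ⟨⟨(E.smulB · b), fun x y => E.add_smulB x y b⟩,
    fun c x => E.smul_smulB c x b⟩ ‖b‖ fun x => norm_smulB_le x b

variable (E) in
/-- The consequence of the positivity of `⟪x, x⟫` on which the theory of regular operators rests.
The axioms of `HilbMod` do not contain positivity: they also hold for the negative of an inner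
product. -/
def InnerSelfMono : Prop :=
  ∀ x y : E.carrier, ‖x‖ ^ 2 ≤ ‖E.inner x x + E.inner y y‖

end HilbMod

section AdjointGraph

variable {E F : HilbMod B}

/-- The graph of the adjoint as a submodule. -/
def adjointSubmodule (G : Set (E.carrier × F.carrier)) : Submodule ℂ (F.carrier × E.carrier) where
  carrier := adjointGraph E F G
  add_mem' {q r} hq hr p hp := by
    simp only [Prod.fst_add, Prod.snd_add, F.inner_add_right, E.inner_add_right, hq p hp, hr p hp]
  zero_mem' p _ := by
    simp only [Prod.fst_zero, Prod.snd_zero, HilbMod.inner_zero_right]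
  smul_mem' c q hq p hp := by
    simp only [Prod.smul_fst, Prod.smul_snd, F.inner_smul_right, E.inner_smul_right, hq p hp]

lemma isClosed_adjointGraph (G : Set (E.carrier × F.carrier)) :
    IsClosed (adjointGraph E F G) := by
  simp only [adjointGraph, ofPred_forall]
  exact isClosed_biInter fun p _ => isClosed_eq (by fun_prop) (by fun_prop)

lemma subset_adjointGraph_comm {G : Set (E.carrier × F.carrier)}
    {H : Set (F.carrier × E.carrier)} :
    G ⊆ adjointGraph F E H ↔ H ⊆ adjointGraph E F G := by
  have himp : ∀ {E F : HilbMod B} {G : Set (E.carrier × F.carrier)}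
      {H : Set (F.carrier × E.carrier)}, G ⊆ adjointGraph F E H → H ⊆ adjointGraph E F G :=
    fun {E F _ _} h q hq p hp => by rw [← F.star_inner, ← E.star_inner, h hp q hq]
  exact ⟨himp, himp⟩

lemma closure_span_subset_adjointGraph_iff {G : Set (E.carrier × F.carrier)}
    {H : Set (F.carrier × E.carrier)} :
    closure (Submodule.span ℂ H : Set (F.carrier × E.carrier)) ⊆ adjointGraph E F G ↔
      H ⊆ adjointGraph E F G := by
  refine ⟨fun h => (Submodule.subset_span.trans subset_closure).trans h, fun h => ?_⟩
  have hspan : Submodule.span ℂ H ≤ adjointSubmodule G := Submodule.span_le.2 h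
  exact closure_minimal hspan (isClosed_adjointGraph G)

lemma closure_span_subset_adjointGraph_closure_span {G : Set (E.carrier × F.carrier)}
    {H : Set (F.carrier × E.carrier)} (h : H ⊆ adjointGraph E F G) :
    closure (Submodule.span ℂ H : Set (F.carrier × E.carrier)) ⊆
      adjointGraph E F (closure (Submodule.span ℂ G : Set (E.carrier × F.carrier))) := by
  rwa [closure_span_subset_adjointGraph_iff, ← subset_adjointGraph_comm,
    closure_span_subset_adjointGraph_iff, subset_adjointGraph_comm]

lemma smulB_mem_closure_span {G : Set (E.carrier × F.carrier)}
    (hG : ∀ p ∈ G, ∀ b : B, (E.smulB p.1 b, F.smulB p.2 b) ∈ G) {p : E.carrier × F.carrier}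
    (hp : p ∈ closure (Submodule.span ℂ G : Set (E.carrier × F.carrier))) (b : B) :
    (E.smulB p.1 b, F.smulB p.2 b) ∈
      closure (Submodule.span ℂ G : Set (E.carrier × F.carrier)) := by
  let R := (E.smulBL b).prodMap (F.smulBL b)
  refine map_mem_closure (f := R) R.continuous hp fun q hq => ?_
  have hspan : Submodule.span ℂ G ≤ (Submodule.span ℂ G).comap (R : _ →ₗ[ℂ] _) :=
    Submodule.span_le.2 fun q hq => Submodule.subset_span (hG q hq b)
  exact hspan hq

lemma isOperatorGraph_of_dense_gdom_adjointGraph {S : Submodule ℂ (E.carrier × F.carrier)}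
    (hinv : ∀ p ∈ S, ∀ b : B, (E.smulB p.1 b, F.smulB p.2 b) ∈ S)
    (hdense : Dense (gdom (adjointGraph E F S))) : IsOperatorGraph E F S := by
  refine ⟨⟨S, rfl⟩, hinv, fun y hy => HilbMod.eq_zero_of_dense_of_inner_eq_zero hdense ?_⟩
  rintro _ ⟨q, hq, rfl⟩
  rw [← F.star_inner, hq _ hy, HilbMod.inner_zero_left, star_zero]

end AdjointGraph

section CompGraph

variable {𝕜 X Y Z : Type*} [NontriviallyNormedField 𝕜] [NormedAddCommGroup X] [NormedSpace 𝕜 X]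
  [NormedAddCommGroup Y] [NormedSpace 𝕜 Y] [NormedAddCommGroup Z] [NormedSpace 𝕜 Z]

/-- The graph of the composition of two unbounded operators with graphs `S` and `T`, together with
the intermediate value. -/
def compGraph (S : Submodule 𝕜 (X × Y)) (T : Submodule 𝕜 (Y × Z)) : Submodule 𝕜 (X × Y × Z) :=
  S.comap ((LinearMap.fst 𝕜 X (Y × Z)).prod (LinearMap.fst 𝕜 Y Z ∘ₗ LinearMap.snd 𝕜 X (Y × Z))) ⊓
    T.comap (LinearMap.snd 𝕜 X (Y × Z))

lemma isClosed_compGraph {S : Submodule 𝕜 (X × Y)} {T : Submodule 𝕜 (Y × Z)}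
    (hS : IsClosed (S : Set (X × Y))) (hT : IsClosed (T : Set (Y × Z))) :
    IsClosed (compGraph S T : Set (X × Y × Z)) :=
  (hS.preimage (by fun_prop : Continuous fun p : X × Y × Z => (p.1, p.2.1))).inter
    (hT.preimage continuous_snd)

/-- The operator `μ + T S` on the graph of the composition. -/
def shiftedComp (S : Submodule 𝕜 (X × Y)) (T : Submodule 𝕜 (Y × X)) (μ : 𝕜) :
    compGraph S T →L[𝕜] X :=
  (μ • .fst 𝕜 X (Y × X) + .snd 𝕜 Y X ∘L .snd 𝕜 X (Y × X)) ∘L (compGraph S T).subtypeL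

lemma continuous_shiftedComp (S : Submodule 𝕜 (X × Y)) (T : Submodule 𝕜 (Y × X)) :
    Continuous (shiftedComp S T) := by
  unfold shiftedComp
  fun_prop

lemma range_shiftedComp (S : Submodule 𝕜 (X × Y)) (T : Submodule 𝕜 (Y × X)) (μ : 𝕜) :
    range (shiftedComp S T μ) = {w | ∃ x y z, (x, y) ∈ S ∧ (y, z) ∈ T ∧ w = μ • x + z} := by
  ext w
  constructor
  · rintro ⟨⟨⟨x, y, z⟩, hxy, hyz⟩, rfl⟩
    exact ⟨x, y, z, hxy, hyz, rfl⟩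
  · rintro ⟨x, y, z, hxy, hyz, rfl⟩
    exact ⟨⟨(x, y, z), hxy, hyz⟩, rfl⟩

end CompGraph

section Regular

variable {E : HilbMod B} {S T : Submodule ℂ (E.carrier × E.carrier)}

lemma norm_le_norm_smul_add_inner (hE : E.InnerSelfMono)
    (hTS : (T : Set (E.carrier × E.carrier)) ⊆ adjointGraph E E S) {μ : ℝ} (hμ : 1 ≤ μ)
    {x y z : E.carrier} (hxy : (x, y) ∈ S) (hyz : (y, z) ∈ T) :
    μ * ‖x‖ ≤ ‖(μ : ℂ) • x + z‖ ∧ ‖y‖ ≤ ‖(μ : ℂ) • x + z‖ := by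
  set w := (μ : ℂ) • x + z
  have hinner : E.inner x w = (μ : ℂ) • E.inner x x + E.inner y y := by
    rw [E.inner_add_right, E.inner_smul_right, hTS hyz _ hxy]
  have hsqrt : (Real.sqrt μ : ℂ) * Real.sqrt μ = μ := by
    exact_mod_cast Real.mul_self_sqrt (by linarith)
  have hself : E.inner ((Real.sqrt μ : ℂ) • x) ((Real.sqrt μ : ℂ) • x) = (μ : ℂ) • E.inner x x := by
    rw [E.inner_smul_right, HilbMod.inner_smul_left, Complex.conj_ofReal, smul_smul, hsqrt]
  have hx : μ * ‖x‖ ^ 2 ≤ ‖x‖ * ‖w‖ := by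
    have h := hE ((Real.sqrt μ : ℂ) • x) y
    rw [hself, ← hinner, norm_smul, mul_pow, Complex.norm_real, Real.norm_of_nonneg (by positivity),
      Real.sq_sqrt (by linarith)] at h
    exact h.trans (E.norm_inner_le x w)
  have hy : ‖y‖ ^ 2 ≤ ‖x‖ * ‖w‖ := by
    have h := hE y ((Real.sqrt μ : ℂ) • x)
    rw [hself, add_comm, ← hinner] at h
    exact h.trans (E.norm_inner_le x w)
  have hx' : μ * ‖x‖ ≤ ‖w‖ := by
    rcases (norm_nonneg x).eq_or_lt with h0 | h0
    · simp [← h0]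
    · exact le_of_mul_le_mul_left (by linarith) h0
  refine ⟨hx', le_of_sq_le_sq ?_ (norm_nonneg w)⟩
  nlinarith [norm_nonneg x, norm_nonneg w]

lemma antilipschitzWith_shiftedComp (hE : E.InnerSelfMono)
    (hTS : (T : Set (E.carrier × E.carrier)) ⊆ adjointGraph E E S) {μ : ℝ} (hμ : 1 ≤ μ) :
    AntilipschitzWith 2 (shiftedComp S T (μ : ℂ)) := by
  refine ContinuousLinearMap.antilipschitz_of_bound _ fun ⟨⟨x, y, z⟩, hxy, hyz⟩ => ?_
  change ‖(x, y, z)‖ ≤ 2 * ‖(μ : ℂ) • x + z‖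
  obtain ⟨hx, hy⟩ : μ * ‖x‖ ≤ ‖(μ : ℂ) • x + z‖ ∧ ‖y‖ ≤ ‖(μ : ℂ) • x + z‖ :=
    norm_le_norm_smul_add_inner hE hTS hμ hxy hyz
  have hz : ‖z‖ ≤ ‖(μ : ℂ) • x + z‖ + μ * ‖x‖ := by
    simpa [norm_smul, abs_of_pos (by linarith : 0 < μ)] using
      norm_sub_le ((μ : ℂ) • x + z) ((μ : ℂ) • x)
  simp only [norm_prod_le_iff]
  have := norm_nonneg x
  exact ⟨by nlinarith, by linarith [norm_nonneg y], by linarith⟩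

theorem exists_eq_smul_add (hE : E.InnerSelfMono)
    (hS : IsClosed (S : Set (E.carrier × E.carrier)))
    (hT : IsClosed (T : Set (E.carrier × E.carrier)))
    (hTS : (T : Set (E.carrier × E.carrier)) ⊆ adjointGraph E E S)
    (hdense : Dense {w : E.carrier | ∃ x y z, (x, y) ∈ S ∧ (y, z) ∈ T ∧ w = x + z})
    {μ : ℝ} (hμ : 1 ≤ μ) (w : E.carrier) :
    ∃ x y z, (x, y) ∈ S ∧ (y, z) ∈ T ∧ w = (μ : ℂ) • x + z := by
  have : CompleteSpace (compGraph S T) := (isClosed_compGraph hS hT).completeSpace_coe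
  have hlip := fun ν (hν : ν ∈ Ici (1 : ℝ)) => antilipschitzWith_shiftedComp hE hTS hν
  have hone : Surjective (shiftedComp S T ((1 : ℝ) : ℂ)) := by
    rw [← range_eq_univ, ← ((hlip 1 self_mem_Ici).isClosed_range
      (shiftedComp S T _).uniformContinuous).closure_eq, range_shiftedComp]
    simpa using hdense.closure_eq
  have hsurj : Surjective (shiftedComp S T (μ : ℂ)) :=
    surjective_of_isPreconnected isPreconnected_Ici
      ((continuous_shiftedComp S T).comp Complex.continuous_ofReal).continuousOn hlip self_mem_Ici
      hμ hone
  exact (range_shiftedComp S T (μ : ℂ)).subset (hsurj w)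

theorem adjointGraph_subset_of_dense (hE : E.InnerSelfMono)
    (hS : IsClosed (S : Set (E.carrier × E.carrier)))
    (hT : IsClosed (T : Set (E.carrier × E.carrier)))
    (hTS : (T : Set (E.carrier × E.carrier)) ⊆ adjointGraph E E S)
    (hdense : Dense {w : E.carrier | ∃ x y z, (x, y) ∈ S ∧ (y, z) ∈ T ∧ w = x + z})
    (hdom : Dense (gdom (T : Set (E.carrier × E.carrier)))) :
    adjointGraph E E S ⊆ T := by
  rintro ⟨y, z⟩ hyz
  refine hT.closure_subset (Metric.mem_closure_iff.2 fun ε hε => ?_)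
  obtain ⟨_, ⟨⟨v, z'⟩, hvz', rfl⟩, hv⟩ := hdom.exists_dist_lt y (half_pos hε)
  obtain ⟨x, y₁, z₁, hxy, hyz₁, hsum⟩ :=
    exists_eq_smul_add hE hS hT hTS hdense le_rfl (z' - z)
  rw [Complex.ofReal_one, one_smul] at hsum
  have hinner : E.inner x x + E.inner y₁ y₁ = E.inner y₁ (v - y) := calc
    _ = E.inner x x + E.inner x z₁ := congrArg _ (hTS hyz₁ _ hxy)
    _ = E.inner x (z' - z) := by rw [← E.inner_add_right, hsum]
    _ = E.inner y₁ v - E.inner y₁ y := by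
      rw [HilbMod.inner_sub_right]
      exact congrArg₂ _ (hTS hvz' _ hxy).symm (hyz _ hxy).symm
    _ = E.inner y₁ (v - y) := (HilbMod.inner_sub_right ..).symm
  have hle : ‖E.inner y₁ (v - y)‖ ≤ ‖y₁‖ * ‖v - y‖ := E.norm_inner_le y₁ (v - y)
  have hx : ‖x‖ ^ 2 ≤ ‖y₁‖ * ‖v - y‖ := (hE x y₁).trans (hinner ▸ hle)
  have hy₁ : ‖y₁‖ ^ 2 ≤ ‖y₁‖ * ‖v - y‖ := (hE y₁ x).trans (add_comm (E.inner x x) _ ▸ hinner ▸ hle)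
  have hy₁le : ‖y₁‖ ≤ ‖v - y‖ := by nlinarith [norm_nonneg y₁, norm_nonneg (v - y)]
  have hxle : ‖x‖ ≤ ‖v - y‖ := by nlinarith [norm_nonneg x, norm_nonneg (v - y)]
  have hvlt : ‖v - y‖ < ε / 2 := dist_eq_norm' y v ▸ hv
  refine ⟨(v - y₁, z' - z₁), T.sub_mem hvz' hyz₁, max_lt ?_ ?_⟩
  · calc dist y (v - y₁) = ‖(v - y) - y₁‖ := by rw [dist_eq_norm', sub_right_comm]
      _ ≤ ‖v - y‖ + ‖y₁‖ := norm_sub_le _ _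
      _ < ε := by linarith
  · calc dist z (z' - z₁) = ‖x‖ := by rw [dist_eq_norm', sub_right_comm, hsum, add_sub_cancel_right]
      _ < ε := by linarith

theorem isSymmetricGraph_isRegular_adjointGraph_eq (hE : E.InnerSelfMono)
    (hS : IsClosed (S : Set (E.carrier × E.carrier)))
    (hT : IsClosed (T : Set (E.carrier × E.carrier))) (hST : S ≤ T)
    (hinv : ∀ p ∈ S, ∀ b : B, (E.smulB p.1 b, E.smulB p.2 b) ∈ S)
    (hTS : (T : Set (E.carrier × E.carrier)) ⊆ adjointGraph E E S)
    (hdom : Dense (gdom (S : Set (E.carrier × E.carrier))))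
    (hdense : Dense {w : E.carrier | ∃ x y z, (x, y) ∈ S ∧ (y, z) ∈ T ∧ w = x + z}) :
    IsSymmetricGraph E S ∧ IsRegular E E S ∧ adjointGraph E E S = T := by
  have hdomT : Dense (gdom (T : Set (E.carrier × E.carrier))) := hdom.mono (image_mono hST)
  have hadj : adjointGraph E E S = T :=
    (adjointGraph_subset_of_dense hE hS hT hTS hdense hdomT).antisymm hTS
  refine ⟨fun _ hp => hTS (hST hp), ⟨⟨?_, hS, hdom, hadj ▸ hdomT⟩, hadj ▸ hdense⟩, hadj⟩
  exact isOperatorGraph_of_dense_gdom_adjointGraph hinv (hadj ▸ hdomT)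

end Regular

section BoundedConvergence

variable {F G : Type*} [NormedAddCommGroup F] [NormedAddCommGroup G]

/-- Uniformly bounded pointwise convergence on `(0, 1)`, the mode of convergence of dominated
convergence. -/
structure BoundedlyTendsto (f : ℕ → ℝ → F) (g : ℝ → F) : Prop where
  bounded : ∃ C, ∀ n, ∀ t ∈ Ioo (0 : ℝ) 1, ‖f n t‖ ≤ C
  tendsto : ∀ t ∈ Ioo (0 : ℝ) 1, Tendsto (f · t) atTop (𝓝 (g t))

namespace BoundedlyTendsto

lemma const {g : ℝ → F} (hg : Continuous g) : BoundedlyTendsto (fun _ => g) g where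
  bounded := by
    obtain ⟨C, hC⟩ := isCompact_Icc.exists_bound_of_continuousOn hg.continuousOn
    exact ⟨C, fun _ t ht => hC t (Ioo_subset_Icc_self ht)⟩
  tendsto _ _ := tendsto_const_nhds

lemma add {f₁ f₂ : ℕ → ℝ → F} {g₁ g₂ : ℝ → F} (h₁ : BoundedlyTendsto f₁ g₁)
    (h₂ : BoundedlyTendsto f₂ g₂) :
    BoundedlyTendsto (fun n t => f₁ n t + f₂ n t) (fun t => g₁ t + g₂ t) where
  bounded := by
    obtain ⟨C₁, hC₁⟩ := h₁.bounded
    obtain ⟨C₂, hC₂⟩ := h₂.bounded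
    exact ⟨C₁ + C₂, fun n t ht => norm_add_le_of_le (hC₁ n t ht) (hC₂ n t ht)⟩
  tendsto t ht := (h₁.tendsto t ht).add (h₂.tendsto t ht)

lemma smul {𝕜 : Type*} [NormedField 𝕜] [NormedSpace 𝕜 F] {c : ℕ → ℝ → 𝕜} {d : ℝ → 𝕜}
    {f : ℕ → ℝ → F} {g : ℝ → F} (hc : BoundedlyTendsto c d) (hf : BoundedlyTendsto f g) :
    BoundedlyTendsto (fun n t => c n t • f n t) (fun t => d t • g t) where
  bounded := by
    obtain ⟨C, hC⟩ := hc.bounded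
    obtain ⟨K, hK⟩ := hf.bounded
    exact ⟨C * K, fun n t ht => (norm_smul _ _).trans_le (mul_le_mul (hC n t ht) (hK n t ht)
      (norm_nonneg _) ((norm_nonneg _).trans (hC n t ht)))⟩
  tendsto t ht := (hc.tendsto t ht).smul (hf.tendsto t ht)

lemma of_norm_le {f : ℕ → ℝ → F} {g : ℕ → ℝ → G} (hg : BoundedlyTendsto g fun _ => 0) {K : ℝ}
    (hf : ∀ n, ∀ t ∈ Ioo (0 : ℝ) 1, ‖f n t‖ ≤ ‖g n t‖ * K) : BoundedlyTendsto f fun _ => 0 where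
  bounded := by
    obtain ⟨C, hC⟩ := hg.bounded
    exact ⟨C * |K|, fun n t ht => (hf n t ht).trans <|
      (mul_le_mul_of_nonneg_left (le_abs_self K) (norm_nonneg _)).trans
        (mul_le_mul_of_nonneg_right (hC n t ht) (abs_nonneg K))⟩
  tendsto t ht := squeeze_zero_norm (hf · t ht) <| by
    simpa using (hg.tendsto t ht).norm.mul_const K

theorem tendsto_integral_norm_sub_sq {f : ℕ → ℝ → F} {g : ℝ → F}
    (h : BoundedlyTendsto f g) (hf : ∀ n, Continuous (f n)) (hg : Continuous g) :
    Tendsto (fun n => ∫ t in (0 : ℝ)..1, ‖f n t - g t‖ ^ 2) atTop (𝓝 0) := by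
  obtain ⟨C, hC⟩ := h.bounded
  obtain ⟨K, hK⟩ := (const hg).bounded
  have hae : ∀ᵐ t : ℝ, t ∈ uIoc (0 : ℝ) 1 → t ∈ Ioo (0 : ℝ) 1 := by
    filter_upwards [Measure.ae_ne volume (1 : ℝ)] with t ht hmem
    rw [uIoc_of_le zero_le_one] at hmem
    exact ⟨hmem.1, hmem.2.lt_of_ne ht⟩
  suffices Tendsto (fun n => ∫ t in (0 : ℝ)..1, ‖f n t - g t‖ ^ 2) atTop
      (𝓝 (∫ _ in (0 : ℝ)..1, (0 : ℝ))) by rwa [intervalIntegral.integral_zero] at this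
  refine intervalIntegral.tendsto_integral_filter_of_dominated_convergence
    (fun _ => (C + K) ^ 2) (.of_forall fun n => ?_) (.of_forall fun n => ?_)
    intervalIntegrable_const ?_
  · exact (((hf n).sub hg).norm.pow 2).aestronglyMeasurable
  · filter_upwards [hae] with t ht hmem
    rw [norm_pow, norm_norm]
    exact pow_le_pow_left₀ (norm_nonneg _)
      (norm_sub_le_of_le (hC n t (ht hmem)) (hK n t (ht hmem))) 2
  · filter_upwards [hae] with t ht hmem
    simpa using ((h.tendsto t (ht hmem)).sub_const (g t)).norm.pow 2

end BoundedlyTendsto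

end BoundedConvergence

section Cutoff

/-- A smooth step which vanishes for `t ≤ 1 / (k + 1)` and equals `1` for `t ≥ 2 / (k + 1)`. -/
def ramp (k : ℕ) (t : ℝ) : ℝ := Real.smoothTransition ((k + 1) * t - 1)

lemma contDiff_ramp (k : ℕ) : ContDiff ℝ ∞ (ramp k) :=
  Real.smoothTransition.contDiff.comp (by fun_prop)

lemma norm_ramp_le_one (k : ℕ) (t : ℝ) : ‖ramp k t‖ ≤ 1 := by
  rw [ramp, Real.norm_of_nonneg (Real.smoothTransition.nonneg _)]
  exact Real.smoothTransition.le_one _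

lemma ramp_eq_zero {k : ℕ} {t : ℝ} (ht : t ≤ ((k : ℝ) + 1)⁻¹) : ramp k t = 0 := by
  rw [← one_div, le_div_iff₀' (by positivity)] at ht
  exact Real.smoothTransition.zero_of_nonpos (by linarith)

lemma tendsto_rescale {t : ℝ} (ht : 0 < t) :
    Tendsto (fun k : ℕ => ((k : ℝ) + 1) * t - 1) atTop atTop :=
  tendsto_atTop_add_const_right _ _
    ((tendsto_atTop_add_const_right _ _ tendsto_natCast_atTop_atTop).atTop_mul_const ht)

lemma tendsto_ramp {t : ℝ} (ht : 0 < t) : Tendsto (ramp · t) atTop (𝓝 1) :=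
  tendsto_const_nhds.congr' <| (tendsto_rescale ht).eventually_ge_atTop 1 |>.mono fun _ hk =>
    (Real.smoothTransition.one_of_one_le hk).symm

lemma deriv_ramp (k : ℕ) (t : ℝ) :
    deriv (ramp k) t = (k + 1) * deriv Real.smoothTransition ((k + 1) * t - 1) := by
  have hinner : HasDerivAt (fun s : ℝ => ((k : ℝ) + 1) * s - 1) (k + 1) t := by
    simpa using ((hasDerivAt_id t).const_mul ((k : ℝ) + 1)).sub_const 1
  rw [mul_comm]
  exact ((Real.smoothTransition.contDiff.differentiable one_ne_zero _).hasDerivAt.comp t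
    hinner).deriv

lemma deriv_smoothTransition_of_one_lt {u : ℝ} (hu : 1 < u) :
    deriv Real.smoothTransition u = 0 := by
  have heq : Real.smoothTransition =ᶠ[𝓝 u] fun _ => 1 :=
    (eventually_gt_nhds hu).mono fun _ hv => Real.smoothTransition.one_of_one_le hv.le
  rw [heq.deriv_eq, deriv_const]

lemma tendsto_deriv_ramp {t : ℝ} (ht : 0 < t) :
    Tendsto (fun k => deriv (ramp k) t) atTop (𝓝 0) :=
  tendsto_const_nhds.congr' <| (tendsto_rescale ht).eventually_gt_atTop 1 |>.mono fun k hk => by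
    simp only [deriv_ramp, deriv_smoothTransition_of_one_lt hk, mul_zero]

-- In the rescaled variable `u = (k + 1) t - 1` the function `t * deriv (ramp k) t` is independent
-- of `k`.
lemma exists_norm_mul_deriv_ramp_le :
    ∃ C, ∀ k : ℕ, ∀ t : ℝ, 0 ≤ t → ‖t * deriv (ramp k) t‖ ≤ C := by
  have hcont : Continuous fun u : ℝ => (u + 1) * deriv Real.smoothTransition u :=
    (continuous_id.add_const 1).mul
      ((Real.smoothTransition.contDiff (n := 1)).continuous_deriv le_rfl)
  obtain ⟨C, hC⟩ := (isCompact_Icc (a := (-1 : ℝ)) (b := 1)).exists_bound_of_continuousOn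
    hcont.continuousOn
  refine ⟨C, fun k t ht => ?_⟩
  have hrescale : t * deriv (ramp k) t =
      ((k + 1) * t - 1 + 1) * deriv Real.smoothTransition ((k + 1) * t - 1) := by
    rw [deriv_ramp]
    ring
  rw [hrescale]
  rcases le_or_gt ((k + 1) * t - 1) 1 with hu | hu
  · exact hC _ ⟨by nlinarith [(k.cast_nonneg : (0 : ℝ) ≤ k)], hu⟩
  · rw [deriv_smoothTransition_of_one_lt hu, mul_zero, norm_zero]
    exact (norm_nonneg _).trans (hC 0 (by simp))

/-- A smooth function supported in `(0, 1)` and equal to `1` away from the end points. -/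
def cutoff (k : ℕ) : C(ℝ, ℝ) where
  toFun t := ramp k t * ramp k (1 - t)
  continuous_toFun := by
    have := (contDiff_ramp k).continuous
    fun_prop

lemma contDiff_cutoff (k : ℕ) : ContDiff ℝ ∞ (cutoff k) :=
  (contDiff_ramp k).mul ((contDiff_ramp k).comp (contDiff_const.sub contDiff_id))

lemma cutoff_eq_zero {k : ℕ} {t : ℝ} (ht : t ≤ ((k : ℝ) + 1)⁻¹ ∨ 1 - ((k : ℝ) + 1)⁻¹ ≤ t) :
    cutoff k t = 0 := by
  rcases ht with ht | ht
  · exact mul_eq_zero_of_left (ramp_eq_zero ht) _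
  · exact mul_eq_zero_of_right _ (ramp_eq_zero (by linarith))

lemma support_cutoff_subset (k : ℕ) : support (cutoff k) ⊆ Ioo 0 1 := by
  have hpos : (0 : ℝ) < ((k : ℝ) + 1)⁻¹ := by positivity
  refine fun t ht => ⟨lt_of_not_ge fun h => ht ?_, lt_of_not_ge fun h => ht ?_⟩
  · exact cutoff_eq_zero (.inl (h.trans hpos.le))
  · exact cutoff_eq_zero (.inr (by linarith))

lemma smoothVan01_cutoff_smul (k : ℕ) {ψ : C(ℝ, ℂ)} (hψ : ContDiff ℝ ∞ ψ) :
    SmoothVan01 (cutoff k • ψ : C(ℝ, ℂ)) := by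
  have hpos : (0 : ℝ) < ((k : ℝ) + 1)⁻¹ := by positivity
  refine ⟨⟨(contDiff_cutoff k).smul hψ, _, hpos, fun t ht => ?_⟩, _, hpos, fun t ht => ?_⟩
  · rw [ContinuousMap.smul_apply', cutoff_eq_zero (.inl ht), zero_smul]
  · rw [ContinuousMap.smul_apply', cutoff_eq_zero (.inr ht), zero_smul]

lemma boundedlyTendsto_cutoff : BoundedlyTendsto (fun k => cutoff k) fun _ => 1 where
  bounded := ⟨1 * 1, fun k t _ =>
    norm_mul_le_of_le (norm_ramp_le_one k t) (norm_ramp_le_one k (1 - t))⟩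
  tendsto _ ht := mul_one (1 : ℝ) ▸ (tendsto_ramp ht.1).mul (tendsto_ramp (sub_pos.2 ht.2))

lemma boundedlyTendsto_cutoff_smul {F : Type*} [NormedAddCommGroup F] [NormedSpace ℝ F]
    {f : ℕ → ℝ → F} {g : ℝ → F} (h : BoundedlyTendsto f g) :
    BoundedlyTendsto (fun k t => cutoff k t • f k t) g := by
  simpa using boundedlyTendsto_cutoff.smul h

lemma deriv_cutoff (k : ℕ) (t : ℝ) :
    deriv (cutoff k) t =
      deriv (ramp k) t * ramp k (1 - t) - ramp k t * deriv (ramp k) (1 - t) := by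
  have hramp (s : ℝ) : HasDerivAt (ramp k) (deriv (ramp k) s) s :=
    ((contDiff_ramp k).differentiable (by simp) s).hasDerivAt
  have hreflect : HasDerivAt (fun s => ramp k (1 - s)) (-deriv (ramp k) (1 - t)) t := by
    simpa using! (hramp (1 - t)).comp t ((hasDerivAt_id t).const_sub 1)
  rw [sub_eq_add_neg, ← mul_neg]
  exact ((hramp t).mul hreflect).deriv

lemma boundedlyTendsto_mul_deriv_cutoff :
    BoundedlyTendsto (fun k t => t * (1 - t) * deriv (cutoff k) t) fun _ => 0 where
  bounded := by
    obtain ⟨C, hC⟩ := exists_norm_mul_deriv_ramp_le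
    refine ⟨C + C, fun k t ht => ?_⟩
    have hsplit : t * (1 - t) * deriv (cutoff k) t =
        t * deriv (ramp k) t * ((1 - t) * ramp k (1 - t)) -
          (1 - t) * deriv (ramp k) (1 - t) * (t * ramp k t) := by
      rw [deriv_cutoff]
      ring
    have hle {s : ℝ} (hs : s ∈ Icc (0 : ℝ) 1) : ‖s * ramp k s‖ ≤ 1 := by
      simpa using norm_mul_le_of_le
        ((Real.norm_of_nonneg hs.1).trans_le hs.2) (norm_ramp_le_one k s)
    rw [hsplit]
    refine (norm_sub_le _ _).trans (add_le_add ?_ ?_)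
    · simpa using norm_mul_le_of_le (hC k t ht.1.le)
        (hle ⟨(sub_pos.2 ht.2).le, sub_le_self _ ht.1.le⟩)
    · simpa using norm_mul_le_of_le (hC k (1 - t) (sub_pos.2 ht.2).le) (hle ⟨ht.1.le, ht.2.le⟩)
  tendsto t ht := by
    have ht' : 0 < 1 - t := sub_pos.2 ht.2
    simp only [deriv_cutoff]
    simpa using (((tendsto_deriv_ramp ht.1).mul (tendsto_ramp ht')).sub
      ((tendsto_ramp ht.1).mul (tendsto_deriv_ramp ht'))).const_mul (t * (1 - t))

lemma exists_norm_le_mul_of_contDiff {F : Type*} [NormedAddCommGroup F] [NormedSpace ℝ F]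
    {ψ : ℝ → F} (hψ : ContDiff ℝ 1 ψ) (h0 : ψ 0 = 0) (h1 : ψ 1 = 0) :
    ∃ K, ∀ t ∈ Icc (0 : ℝ) 1, ‖ψ t‖ ≤ t * (1 - t) * K := by
  obtain ⟨C, hC⟩ := isCompact_Icc.exists_bound_of_continuousOn
    (hψ.continuous_deriv le_rfl).continuousOn (s := Icc (0 : ℝ) 1)
  have hlip {s t : ℝ} (hs : s ∈ Icc (0 : ℝ) 1) (ht : t ∈ Icc (0 : ℝ) 1) :
      ‖ψ t - ψ s‖ ≤ C * ‖t - s‖ :=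
    (convex_Icc 0 1).norm_image_sub_le_of_norm_deriv_le
      (fun u _ => hψ.differentiable one_ne_zero u) hC hs ht
  refine ⟨2 * C, fun t ht => ?_⟩
  have hleft : ‖ψ t‖ ≤ C * t := by
    simpa [h0, abs_of_nonneg ht.1] using hlip (left_mem_Icc.2 zero_le_one) ht
  have hright : ‖ψ t‖ ≤ C * (1 - t) := by
    simpa [h1, abs_sub_comm t 1, abs_of_nonneg (sub_nonneg.2 ht.2)] using
      hlip (right_mem_Icc.2 zero_le_one) ht
  nlinarith [ht.1, ht.2]

-- The derivative of `cutoff n` grows like `n` near the end points, which the zeros of `ψ` there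
-- compensate.
theorem exists_smoothVan01_boundedlyTendsto {ψ ψ' : C(ℝ, ℂ)} (hψ : ContDiff ℝ ∞ ψ)
    (hψ' : ∀ t, HasDerivAt ψ (ψ' t) t) (h0 : ψ 0 = 0) (h1 : ψ 1 = 0) :
    ∃ φ φ' : ℕ → C(ℝ, ℂ), (∀ n, SmoothVan01 (φ n)) ∧ (∀ n t, HasDerivAt (φ n) (φ' n t) t) ∧
      BoundedlyTendsto (fun n => φ n) ψ ∧ BoundedlyTendsto (fun n => φ' n) ψ' := by
  obtain ⟨K, hK⟩ := exists_norm_le_mul_of_contDiff (hψ.of_le (by simp)) h0 h1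
  have hψb := BoundedlyTendsto.const ψ.continuous
  have hψb' := BoundedlyTendsto.const ψ'.continuous
  have hcont (n : ℕ) : Continuous (deriv (cutoff n)) :=
    (contDiff_cutoff n).continuous_deriv (by simp)
  have hzero : BoundedlyTendsto (fun n t => deriv (cutoff n) t • ψ t) fun _ => 0 :=
    boundedlyTendsto_mul_deriv_cutoff.of_norm_le (K := K) fun n t ht => by
      have hpos : 0 ≤ t * (1 - t) := mul_nonneg ht.1.le (sub_pos.2 ht.2).le
      rw [norm_smul, norm_mul, Real.norm_of_nonneg hpos, mul_comm (t * (1 - t)), mul_assoc]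
      exact mul_le_mul_of_nonneg_left (hK t (Ioo_subset_Icc_self ht)) (norm_nonneg _)
  refine ⟨fun n => cutoff n • ψ, fun n => cutoff n • ψ' + (⟨_, hcont n⟩ : C(ℝ, ℝ)) • ψ,
    fun n => smoothVan01_cutoff_smul n hψ, fun n t => ?_, boundedlyTendsto_cutoff_smul hψb, ?_⟩
  · exact ((contDiff_cutoff n).differentiable (by simp) t).hasDerivAt.smul (hψ' t)
  · simpa only [add_zero] using! (boundedlyTendsto_cutoff_smul hψb').add hzero

end Cutoff

/-- `L` is a model of `E ⊗ L²[0,1]`, in which `embV h` is the class of the continuous function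
`h`. -/
structure IsIntervalTensor (E L : HilbMod B) (embV : (ℝ → E.carrier) → L.carrier) : Prop where
  embV_add : ∀ h₁ h₂ : ℝ → E.carrier, Continuous h₁ → Continuous h₂ →
    embV (h₁ + h₂) = embV h₁ + embV h₂
  embV_smul : ∀ (c : ℂ) (h : ℝ → E.carrier), Continuous h →
    embV (fun t => c • h t) = c • embV h
  embV_smulB : ∀ (h : ℝ → E.carrier) (b : B), Continuous h →
    embV (fun t => E.smulB (h t) b) = L.smulB (embV h) b
  embV_inner : ∀ h₁ h₂ : ℝ → E.carrier, Continuous h₁ → Continuous h₂ →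
    L.inner (embV h₁) (embV h₂) = ∫ t in (0 : ℝ)..1, E.inner (h₁ t) (h₂ t)
  embV_total : Dense {z : L.carrier | ∃ h : ℝ → E.carrier, Continuous h ∧ z = embV h}

namespace IsIntervalTensor

variable {E L : HilbMod B} {embV : (ℝ → E.carrier) → L.carrier} (M : IsIntervalTensor E L embV)

/-- The map `embV` as a linear map on continuous functions. -/
def emb : C(ℝ, E.carrier) →ₗ[ℂ] L.carrier where
  toFun h := embV h
  map_add' h₁ h₂ := M.embV_add h₁ h₂ h₁.continuous h₂.continuous
  map_smul' c h := M.embV_smul c h h.continuous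

lemma inner_emb (h₁ h₂ : C(ℝ, E.carrier)) :
    L.inner (M.emb h₁) (M.emb h₂) = ∫ t in (0 : ℝ)..1, E.inner (h₁ t) (h₂ t) :=
  M.embV_inner h₁ h₂ h₁.continuous h₂.continuous

lemma denseRange_emb : DenseRange M.emb :=
  M.embV_total.mono <| by
    rintro _ ⟨h, hh, rfl⟩
    exact ⟨⟨h, hh⟩, rfl⟩

lemma norm_emb_sq_le (h : C(ℝ, E.carrier)) :
    ‖M.emb h‖ ^ 2 ≤ ∫ t in (0 : ℝ)..1, ‖h t‖ ^ 2 := by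
  simp only [L.norm_sq_eq, M.inner_emb, E.norm_sq_eq]
  exact intervalIntegral.norm_integral_le_integral_norm zero_le_one

lemma norm_emb_le {h : C(ℝ, E.carrier)} {C : ℝ} (hC : 0 ≤ C)
    (hh : ∀ t ∈ Icc (0 : ℝ) 1, ‖h t‖ ≤ C) : ‖M.emb h‖ ≤ C := by
  refine le_of_sq_le_sq ((M.norm_emb_sq_le h).trans ?_) hC
  calc ∫ t in (0 : ℝ)..1, ‖h t‖ ^ 2 ≤ ∫ _ in (0 : ℝ)..1, C ^ 2 :=
        intervalIntegral.integral_mono_on zero_le_one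
          ((h.continuous.norm.pow 2).intervalIntegrable _ _) intervalIntegrable_const
          fun t ht => pow_le_pow_left₀ (norm_nonneg _) (hh t ht) 2
    _ = C ^ 2 := by simp

lemma emb_congr {h₁ h₂ : C(ℝ, E.carrier)} (h : EqOn h₁ h₂ (Icc 0 1)) : M.emb h₁ = M.emb h₂ := by
  rw [← sub_eq_zero, ← map_sub, ← norm_le_zero_iff]
  exact M.norm_emb_le le_rfl fun t ht => by simp [h ht]

theorem tendsto_emb {h : ℕ → C(ℝ, E.carrier)} {k : C(ℝ, E.carrier)}
    (hk : BoundedlyTendsto (fun n => h n) k) :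
    Tendsto (fun n => M.emb (h n)) atTop (𝓝 (M.emb k)) := by
  have hsq : Tendsto (fun n => ‖M.emb (h n - k)‖ ^ 2) atTop (𝓝 0) :=
    squeeze_zero (fun _ => sq_nonneg _) (fun n => M.norm_emb_sq_le (h n - k))
      (hk.tendsto_integral_norm_sub_sq (fun n => (h n).continuous) k.continuous)
  rw [tendsto_iff_norm_sub_tendsto_zero]
  simpa [Function.comp_def] using (Real.continuous_sqrt.tendsto 0).comp hsq

/-- The elementary tensor `φ ⊗ ξ`. -/
def tmul : C(ℝ, ℂ) →ₗ[ℂ] E.carrier →ₗ[ℂ] L.carrier :=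
  (LinearMap.mk₂ ℂ (fun φ ξ => φ • ContinuousMap.const ℝ ξ)
    (fun φ ψ ξ => add_smul φ ψ _)
    (fun c φ ξ => by ext t; exact smul_assoc c (φ t) ξ)
    (fun φ ξ η => by ext t; exact smul_add (φ t) ξ η)
    (fun c φ ξ => by ext t; exact smul_comm (φ t) c ξ)).compr₂ M.emb

lemma tmul_apply (φ : C(ℝ, ℂ)) (ξ : E.carrier) :
    M.tmul φ ξ = M.emb (φ • ContinuousMap.const ℝ ξ) := rfl

lemma inner_tmul (φ ψ : C(ℝ, ℂ)) (ξ η : E.carrier) :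
    L.inner (M.tmul φ ξ) (M.tmul ψ η) =
      (∫ t in (0 : ℝ)..1, conj (φ t) * ψ t) • E.inner ξ η := by
  simp only [tmul_apply, inner_emb, ← intervalIntegral.integral_smul_const, mul_comm (conj _),
    mul_smul]
  refine intervalIntegral.integral_congr fun t _ => ?_
  simp [HilbMod.inner_smul_left, E.inner_smul_right]

lemma tmul_smulB (φ : C(ℝ, ℂ)) (ξ : E.carrier) (b : B) :
    M.tmul φ (E.smulB ξ b) = L.smulB (M.tmul φ ξ) b := by
  refine Eq.trans ?_ (M.embV_smulB _ b (φ • ContinuousMap.const ℝ ξ).continuous)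
  exact congrArg embV (funext fun t => (E.smul_smulB (φ t) ξ b).symm)

lemma norm_tmul_le {φ : C(ℝ, ℂ)} {C : ℝ} (hφ : ∀ t ∈ Icc (0 : ℝ) 1, ‖φ t‖ ≤ C) (ξ : E.carrier) :
    ‖M.tmul φ ξ‖ ≤ C * ‖ξ‖ := by
  have hC : 0 ≤ C := (norm_nonneg _).trans (hφ 0 (left_mem_Icc.2 zero_le_one))
  refine M.norm_emb_le (by positivity) fun t ht => ?_
  exact (norm_smul _ _).trans_le (mul_le_mul_of_nonneg_right (hφ t ht) (norm_nonneg ξ))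

lemma continuous_tmul_right (φ : C(ℝ, ℂ)) : Continuous (M.tmul φ) := by
  obtain ⟨C, hC⟩ := isCompact_Icc.exists_bound_of_continuousOn φ.continuous.continuousOn
  exact AddMonoidHomClass.continuous_of_bound (M.tmul φ) C (M.norm_tmul_le hC)

lemma tendsto_tmul {φ : ℕ → C(ℝ, ℂ)} {ψ : C(ℝ, ℂ)} (hψ : BoundedlyTendsto (fun n => φ n) ψ)
    (ξ : E.carrier) : Tendsto (fun n => M.tmul (φ n) ξ) atTop (𝓝 (M.tmul ψ ξ)) :=
  M.tendsto_emb (hψ.smul (.const continuous_const))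

end IsIntervalTensor

section Density

/-- The `k`-th Bernstein polynomial of degree `n`, as a function on `ℝ`. -/
def bernsteinFun (n k : ℕ) : C(ℝ, ℂ) :=
  ⟨fun t => ((bernsteinPolynomial ℝ n k).eval t : ℝ), by fun_prop⟩

lemma contDiff_bernsteinFun (n k : ℕ) : ContDiff ℝ ∞ (bernsteinFun n k) :=
  Complex.ofRealCLM.contDiff.comp (by
    simpa using (bernsteinPolynomial ℝ n k).contDiff_aeval (𝕜 := ℝ) ∞)

lemma boundedlyTendsto_bernsteinFun {F : Type*} [NormedAddCommGroup F] [NormedSpace ℂ F]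
    (h : C(ℝ, F)) :
    BoundedlyTendsto (fun n t => ∑ k : Fin (n + 1), bernsteinFun n k t • h (bernstein.z k)) h := by
  have hlim := bernsteinApproximation_uniform (h.restrict unitInterval)
  have heq (n : ℕ) (t : unitInterval) :
      ∑ k : Fin (n + 1), bernsteinFun n k t • h (bernstein.z k) =
        bernsteinApproximation n (h.restrict unitInterval) t := by
    rw [bernsteinApproximation.apply]
    exact Finset.sum_congr rfl fun k _ => Complex.coe_smul _ _
  constructor
  · obtain ⟨C, hC⟩ := hlim.norm.bddAbove_range
    refine ⟨C, fun n t ht => ?_⟩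
    rw [heq n ⟨t, Ioo_subset_Icc_self ht⟩]
    exact (ContinuousMap.norm_coe_le_norm _ _).trans (hC ⟨n, rfl⟩)
  · intro t ht
    simp only [heq _ ⟨t, Ioo_subset_Icc_self ht⟩]
    exact ((continuous_eval_const _).tendsto _).comp hlim

end Density

section Sine

/-- The function `sin (n π t)`. -/
def sine (n : ℤ) : C(ℝ, ℂ) := ⟨fun t => Complex.sin (t * (n * π)), by fun_prop⟩

/-- The function `cos (n π t)`. -/
def cosine (n : ℤ) : C(ℝ, ℂ) := ⟨fun t => Complex.cos (t * (n * π)), by fun_prop⟩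

lemma contDiff_sine (n : ℤ) : ContDiff ℝ ∞ (sine n) :=
  Complex.contDiff_sin.restrict_scalars ℝ |>.comp (Complex.ofRealCLM.contDiff.mul contDiff_const)

lemma contDiff_cosine (n : ℤ) : ContDiff ℝ ∞ (cosine n) :=
  Complex.contDiff_cos.restrict_scalars ℝ |>.comp (Complex.ofRealCLM.contDiff.mul contDiff_const)

lemma hasDerivAt_sine (n : ℤ) (t : ℝ) :
    HasDerivAt (sine n) (((n * π : ℂ) • cosine n) t) t := by
  have h := (((hasDerivAt_id (t : ℂ)).mul_const (n * π : ℂ)).csin).comp_ofReal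
  simpa [sine, cosine, mul_comm] using h

lemma hasDerivAt_cosine (n : ℤ) (t : ℝ) :
    HasDerivAt (cosine n) ((-(n * π : ℂ) • sine n) t) t := by
  have h := (((hasDerivAt_id (t : ℂ)).mul_const (n * π : ℂ)).ccos).comp_ofReal
  simpa [sine, cosine, mul_comm] using h

lemma sine_zero (n : ℤ) : sine n 0 = 0 := by simp [sine]

lemma sine_one (n : ℤ) : sine n 1 = 0 := by simp [sine, Complex.sin_int_mul_pi]

/-- The odd part, up to a factor `2`, of a `2`-periodic function. -/
def oddPart : C(AddCircle (2 : ℝ), ℂ) →ₗ[ℂ] C(ℝ, ℂ) where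
  toFun f := ⟨fun t => f t - f (-t : ℝ), by fun_prop⟩
  map_add' f g := by ext t; exact add_sub_add_comm ..
  map_smul' c f := by ext t; exact (smul_sub c (f t) _).symm

lemma oddPart_apply (f : C(AddCircle (2 : ℝ), ℂ)) (t : ℝ) :
    oddPart f t = f t - f (-t : ℝ) := rfl

lemma oddPart_fourier (n : ℤ) : oddPart (fourier n) = (2 * Complex.I) • sine n := by
  ext t
  have hexp (s : ℝ) : fourier n (s : AddCircle (2 : ℝ)) =
      Complex.exp (s * (n * π) * Complex.I) := by
    rw [fourier_coe_apply]
    congr 1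
    push_cast
    ring
  rw [oddPart_apply, hexp, hexp, ContinuousMap.smul_apply, sine, ContinuousMap.coe_mk,
    Complex.sin, smul_eq_mul]
  simp only [Complex.ofReal_neg, neg_mul]
  linear_combination (Complex.exp (t * (n * π) * Complex.I) -
    Complex.exp (-(t * (n * π) * Complex.I))) * Complex.I_sq

lemma exists_eqOn_oddPart {φ : C(ℝ, ℂ)} (h0 : φ 0 = 0) (h1 : ∀ t, 1 ≤ t → φ t = 0) :
    ∃ f, EqOn (oddPart f) φ (Icc 0 1) := by
  have : Fact ((0 : ℝ) < 2) := ⟨two_pos⟩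
  have hcont : Continuous (AddCircle.liftIco (2 : ℝ) 0 φ) :=
    AddCircle.liftIco_zero_continuous (by rw [h0, h1 2 one_le_two]) φ.continuous.continuousOn
  have hlift {t : ℝ} (ht : t ∈ Ico (0 : ℝ) 2) : AddCircle.liftIco (2 : ℝ) 0 φ t = φ t :=
    AddCircle.liftIco_zero_coe_apply ht
  refine ⟨⟨_, hcont⟩, fun t ht => ?_⟩
  simp only [oddPart_apply, ContinuousMap.coe_mk]
  rcases ht.1.eq_or_lt with rfl | hpos
  · simp [h0]
  · have hneg : ((-t : ℝ) : AddCircle (2 : ℝ)) = ((2 - t : ℝ) : AddCircle (2 : ℝ)) := by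
      rw [← AddCircle.coe_add_period 2 (-t), neg_add_eq_sub]
    rw [hneg, hlift ⟨ht.1, by linarith [ht.2]⟩, hlift ⟨by linarith [ht.2], by linarith⟩,
      h1 (2 - t) (by linarith [ht.2]), sub_zero]

end Sine

namespace IsIntervalTensor

variable {E L : HilbMod B} {embV : (ℝ → E.carrier) → L.carrier} (M : IsIntervalTensor E L embV)

lemma tmul_congr {φ ψ : C(ℝ, ℂ)} (h : EqOn φ ψ (Icc 0 1)) (ξ : E.carrier) :
    M.tmul φ ξ = M.tmul ψ ξ :=
  M.emb_congr fun _ ht => congrArg (· • ξ) (h ht)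

lemma eq_top_of_emb_mem {W : Submodule ℂ L.carrier} (hW : IsClosed (W : Set L.carrier))
    (h : ∀ k, M.emb k ∈ W) : W = ⊤ := by
  rw [← hW.submodule_topologicalClosure_eq, ← Submodule.dense_iff_topologicalClosure_eq_top]
  exact M.denseRange_emb.mono (range_subset_iff.2 h)

theorem eq_top_of_smoothVan01_tmul_mem {W : Submodule ℂ L.carrier}
    (hW : IsClosed (W : Set L.carrier)) {X : Set E.carrier} (hX : Dense X)
    (h : ∀ φ : C(ℝ, ℂ), SmoothVan01 φ → ∀ ξ ∈ X, M.tmul φ ξ ∈ W) : W = ⊤ := by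
  have hmem (φ : C(ℝ, ℂ)) (hφ : SmoothVan01 φ) (ξ : E.carrier) : M.tmul φ ξ ∈ W :=
    hX.induction (P := (M.tmul φ · ∈ W)) (h φ hφ) (hW.preimage (M.continuous_tmul_right φ)) ξ
  refine M.eq_top_of_emb_mem hW fun k => ?_
  let approx (n : ℕ) : C(ℝ, E.carrier) :=
    ∑ i : Fin (n + 1), (cutoff n • bernsteinFun n i) • ContinuousMap.const ℝ (k (bernstein.z i))
  have happrox : BoundedlyTendsto (fun n => approx n) k := by
    convert! boundedlyTendsto_cutoff_smul (boundedlyTendsto_bernsteinFun k) using 3 with n t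
    simp [approx, Finset.smul_sum]
  refine hW.mem_of_tendsto (M.tendsto_emb happrox) (.of_forall fun n => ?_)
  rw [map_sum]
  exact W.sum_mem fun i _ => hmem _ (smoothVan01_cutoff_smul n (contDiff_bernsteinFun n i)) _

theorem eq_top_of_sine_tmul_mem {W : Submodule ℂ L.carrier} (hW : IsClosed (W : Set L.carrier))
    (h : ∀ n ξ, M.tmul (sine n) ξ ∈ W) : W = ⊤ := by
  have hodd (ξ : E.carrier) (f : C(AddCircle (2 : ℝ), ℂ)) : M.tmul (oddPart f) ξ ∈ W := by
    have : Fact ((0 : ℝ) < 2) := ⟨two_pos⟩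
    let A : C(AddCircle (2 : ℝ), ℂ) →L[ℂ] L.carrier :=
      (M.tmul.flip ξ ∘ₗ oddPart).mkContinuousOfExistsBound ⟨2 * ‖ξ‖, fun f => by
        rw [mul_right_comm]
        exact M.norm_tmul_le (fun t _ => (norm_sub_le _ _).trans (by
          linarith [f.norm_coe_le_norm t, f.norm_coe_le_norm (-t : ℝ)])) ξ⟩
    have hspan : Submodule.span ℂ (range (@fourier 2)) ≤ W.comap (A : _ →ₗ[ℂ] L.carrier) := by
      rw [Submodule.span_le, range_subset_iff]
      intro n
      change M.tmul (oddPart (fourier n)) ξ ∈ W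
      rw [oddPart_fourier, map_smul]
      exact W.smul_mem _ (h n ξ)
    have htop := Submodule.topologicalClosure_minimal _ hspan (hW.preimage A.continuous)
    rw [span_fourier_closure_eq_top] at htop
    exact htop Submodule.mem_top
  refine M.eq_top_of_smoothVan01_tmul_mem hW dense_univ fun φ hφ ξ _ => ?_
  obtain ⟨⟨-, ε, hε, hleft⟩, δ, hδ, hright⟩ := hφ
  obtain ⟨f, hf⟩ := exists_eqOn_oddPart (hleft 0 hε.le) fun t ht => hright t (by linarith)
  exact M.tmul_congr hf ξ ▸ hodd ξ f

end IsIntervalTensor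

section Positivity

lemma integral_comp_two_mul_sub {F : Type*} [NormedAddCommGroup F] [NormedSpace ℝ F] {f : ℝ → F}
    (hf : support f ⊆ Ioo 0 1) {d : ℝ} (hd : d ∈ Icc (0 : ℝ) 1) :
    ∫ t in (0 : ℝ)..1, f (2 * t - d) = (2 : ℝ)⁻¹ • ∫ t in (0 : ℝ)..1, f t := by
  have hcut {a b : ℝ} (ha : a ≤ 0) (hb : 1 ≤ b) : ∫ t in a..b, f t = ∫ t, f t :=
    intervalIntegral.integral_eq_integral_of_support_subset <| hf.trans fun t ht =>
      ⟨ha.trans_lt ht.1, ht.2.le.trans hb⟩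
  rw [intervalIntegral.integral_comp_mul_sub f two_ne_zero, hcut le_rfl le_rfl,
    hcut (by linarith [hd.1]) (by linarith [hd.2])]

namespace IsIntervalTensor

variable {E L : HilbMod B} {embV : (ℝ → E.carrier) → L.carrier} (M : IsIntervalTensor E L embV)

lemma inner_emb_comp_two_mul_sub {h : C(ℝ, E.carrier)} (hh : support h ⊆ Ioo 0 1) {d : ℝ}
    (hd : d ∈ Icc (0 : ℝ) 1) {r : C(ℝ, ℝ)} (hr : ∀ t, r t = 2 * t - d) :
    L.inner (M.emb (h.comp r)) (M.emb (h.comp r)) =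
      (2 : ℝ)⁻¹ • L.inner (M.emb h) (M.emb h) := by
  simp only [inner_emb, ContinuousMap.comp_apply, hr]
  refine integral_comp_two_mul_sub (f := fun t => E.inner (h t) (h t)) (subset_trans ?_ hh) hd
  exact fun t ht hzero => ht (by simp [hzero])

-- Squeezing `h` into `[0, 1/2]` and `k` into `[1/2, 1]` makes them orthogonal.
lemma norm_emb_sq_le_norm_inner_add {h k : C(ℝ, E.carrier)} (hh : support h ⊆ Ioo 0 1)
    (hk : support k ⊆ Ioo 0 1) :
    ‖M.emb h‖ ^ 2 ≤
      ‖L.inner (M.emb h) (M.emb h) + L.inner (M.emb k) (M.emb k)‖ := by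
  let left : C(ℝ, ℝ) := ⟨fun t => 2 * t - 0, by fun_prop⟩
  let right : C(ℝ, ℝ) := ⟨fun t => 2 * t - 1, by fun_prop⟩
  set x := M.emb (h.comp left)
  set y := M.emb (k.comp right)
  have hx : L.inner x x = (2 : ℝ)⁻¹ • L.inner (M.emb h) (M.emb h) :=
    M.inner_emb_comp_two_mul_sub hh (left_mem_Icc.2 zero_le_one) fun _ => rfl
  have hy : L.inner y y = (2 : ℝ)⁻¹ • L.inner (M.emb k) (M.emb k) :=
    M.inner_emb_comp_two_mul_sub hk (right_mem_Icc.2 zero_le_one) fun _ => rfl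
  have horth : L.inner x y = 0 := by
    rw [M.inner_emb]
    refine (intervalIntegral.integral_congr fun t _ => ?_).trans intervalIntegral.integral_zero
    rcases le_total t (1 / 2) with ht | ht
    · have hzero : k (right t) = 0 := notMem_support.1 fun hmem => by
        linarith [(hk hmem).1, show right t = 2 * t - 1 from rfl]
      simp [hzero]
    · have hzero : h (left t) = 0 := notMem_support.1 fun hmem => by
        linarith [(hh hmem).2, show left t = 2 * t - 0 from rfl]
      simp [hzero]
  have hsum : L.inner (x + y) (x + y) =
      (2 : ℝ)⁻¹ • (L.inner (M.emb h) (M.emb h) + L.inner (M.emb k) (M.emb k)) := by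
    have horth' : L.inner y x = 0 := by rw [← L.star_inner, horth, star_zero]
    rw [HilbMod.inner_add_left, L.inner_add_right, L.inner_add_right, horth, horth', hx, hy,
      add_zero, zero_add, smul_add]
  have hle := pow_le_pow_left₀ (norm_nonneg x) (HilbMod.norm_le_norm_add_of_inner_eq_zero horth) 2
  rw [L.norm_sq_eq, L.norm_sq_eq, hx, hsum, norm_smul, norm_smul] at hle
  rw [L.norm_sq_eq]
  exact le_of_mul_le_mul_left hle (by norm_num)

include M in
theorem innerSelfMono_right : L.InnerSelfMono := by
  let W : Set L.carrier := M.emb '' {h | support h ⊆ Ioo 0 1}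
  have hW : Dense W := by
    refine dense_closure.1 (M.denseRange_emb.mono ?_)
    rintro _ ⟨h, rfl⟩
    refine mem_closure_of_tendsto (M.tendsto_emb (boundedlyTendsto_cutoff_smul
      (.const h.continuous)) (h := fun n => cutoff n • h)) (.of_forall fun n => ⟨_, ?_, rfl⟩)
    exact (support_smul_subset_left (cutoff n) h).trans (support_cutoff_subset n)
  have hcont : Continuous fun p : L.carrier × L.carrier =>
      ‖L.inner p.1 p.1 + L.inner p.2 p.2‖ - ‖p.1‖ ^ 2 := by fun_prop
  intro x y
  refine sub_nonneg.1 ((hW.prod hW).induction (P := fun p : L.carrier × L.carrier =>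
      0 ≤ ‖L.inner p.1 p.1 + L.inner p.2 p.2‖ - ‖p.1‖ ^ 2) ?_
    (isClosed_le continuous_const hcont) (x, y))
  rintro ⟨_, _⟩ ⟨⟨h, hh, rfl⟩, ⟨k, hk, rfl⟩⟩
  exact sub_nonneg.2 (M.norm_emb_sq_le_norm_inner_add hh hk)

include M in
theorem innerSelfMono_left : E.InnerSelfMono := by
  intro x y
  have hinner (ξ : E.carrier) : L.inner (M.tmul 1 ξ) (M.tmul 1 ξ) = E.inner ξ ξ := by
    simp [M.inner_tmul]
  simpa only [E.norm_sq_eq, L.norm_sq_eq, hinner] using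
    M.innerSelfMono_right (M.tmul 1 x) (M.tmul 1 y)

end IsIntervalTensor

end Positivity

lemma exists_hasDerivAt {φ : ℝ → ℂ} (hφ : ContDiff ℝ ∞ φ) :
    ∃ φ' : C(ℝ, ℂ), ∀ t, HasDerivAt φ (φ' t) t :=
  ⟨⟨deriv φ, hφ.continuous_deriv (by simp)⟩,
    fun t => (hφ.differentiable (by simp) t).hasDerivAt⟩

lemma integral_conj_deriv_mul {φ φ' ψ ψ' : C(ℝ, ℂ)} (hφ : ∀ t, HasDerivAt φ (φ' t) t)
    (hψ : ∀ t, HasDerivAt ψ (ψ' t) t) (h0 : φ 0 = 0) (h1 : φ 1 = 0) :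
    ∫ t in (0 : ℝ)..1, conj (φ' t) * ψ t = -∫ t in (0 : ℝ)..1, conj (φ t) * ψ' t := by
  have hparts := intervalIntegral.integral_mul_deriv_eq_deriv_mul (a := 0) (b := 1)
    (fun t _ => (hφ t).star) (fun t _ => hψ t)
    (φ'.continuous.star.intervalIntegrable _ _) (ψ'.continuous.intervalIntegrable _ _)
  simp only [h0, h1, star_zero, zero_mul, sub_zero, zero_sub] at hparts
  exact (neg_eq_iff_eq_neg.2 hparts).symm

section ExteriorProduct

variable {E L : HilbMod B} {g : GradingOf E} {GD : Set (E.carrier × E.carrier)}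
  {embV : (ℝ → E.carrier) → L.carrier}

lemma GradingOf.inner_γ_left (g : GradingOf E) (x y : E.carrier) :
    E.inner (g.γ.toFun x) y = E.inner x (g.γ.toFun y) := by
  rw [g.γ.inner_adj, g.selfadj]

lemma odd_adjointGraph (hodd : ∀ p ∈ GD, (g.γ.toFun p.1, -(g.γ.toFun p.2)) ∈ GD)
    {y z : E.carrier} (hyz : (y, z) ∈ adjointGraph E E GD) :
    (g.γ.toFun y, -(g.γ.toFun z)) ∈ adjointGraph E E GD := fun p hp => by
  have h := hyz _ (hodd p hp)
  simp only [HilbMod.inner_neg_left, g.inner_γ_left] at h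
  rw [HilbMod.inner_neg_right, ← h, neg_neg]

theorem IsRegular.exists_eq_smul_add (hE : E.InnerSelfMono) (hreg : IsRegular E E GD) {μ : ℝ}
    (hμ : 1 ≤ μ) (ξ : E.carrier) :
    ∃ η ζ θ, (η, ζ) ∈ GD ∧ (ζ, θ) ∈ adjointGraph E E GD ∧ ξ = (μ : ℂ) • η + θ := by
  obtain ⟨⟨⟨⟨D, rfl⟩, -, -⟩, hclosed, -, -⟩, hdense⟩ := hreg
  exact UKK.exists_eq_smul_add (T := adjointSubmodule (D : Set (E.carrier × E.carrier)))
    hE hclosed (isClosed_adjointGraph _) subset_rfl hdense hμ ξ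

variable (E L g GD embV) in
/-- The graph of `D ⊠̂ ∂^min` as a closed submodule. -/
def minProdGraph : Submodule ℂ (L.carrier × L.carrier) :=
  (Submodule.span ℂ (minProdCore E L g GD embV)).topologicalClosure

variable (E L g GD embV) in
/-- The graph of the closure of `D* ⊠̂ ∂^max` as a closed submodule. -/
def maxProdGraph : Submodule ℂ (L.carrier × L.carrier) :=
  (Submodule.span ℂ (maxProdCore E L g GD embV)).topologicalClosure

lemma isClosed_minProdGraph :
    IsClosed (minProdGraph E L g GD embV : Set (L.carrier × L.carrier)) :=
  Submodule.isClosed_topologicalClosure _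

lemma isClosed_maxProdGraph :
    IsClosed (maxProdGraph E L g GD embV : Set (L.carrier × L.carrier)) :=
  Submodule.isClosed_topologicalClosure _

lemma minProdGraph_le_maxProdGraph (hsym : IsSymmetricGraph E GD) :
    minProdGraph E L g GD embV ≤ maxProdGraph E L g GD embV := by
  refine Submodule.topologicalClosure_mono (Submodule.span_mono ?_)
  rintro _ ⟨φ, ξ, η, hφ, hξ, rfl⟩
  exact ⟨φ, ξ, η, hφ.1.1, hsym hξ, rfl⟩

namespace IsIntervalTensor

variable (M : IsIntervalTensor E L embV)

variable (g) in
/-- The element `(φ ⊗ ξ, iφ ⊗ γη + iφ' ⊗ γξ)` of the graph of an exterior product with `i d/dx`,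
where `φ'` stands for the derivative of `φ` and `η` for the value of the operator at `ξ`. -/
def prodPair (φ φ' : C(ℝ, ℂ)) (ξ η : E.carrier) : L.carrier × L.carrier :=
  (M.tmul φ ξ, Complex.I • (M.tmul φ (g.γ.toFun η) + M.tmul φ' (g.γ.toFun ξ)))

lemma prodPair_eq {φ φ' : C(ℝ, ℂ)} (hφ' : ∀ t, HasDerivAt φ (φ' t) t) (ξ η : E.carrier) :
    M.prodPair g φ φ' ξ η =
      (embV fun t => φ t • ξ, embV fun t => (Complex.I * φ t) • g.γ.toFun η +
        (Complex.I * deriv φ t) • g.γ.toFun ξ) := by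
  simp only [prodPair, tmul_apply, ← map_add, ← map_smul]
  refine congrArg₂ _ rfl (congrArg embV (funext fun t => ?_))
  simp [(hφ' t).deriv, smul_smul]

lemma mem_minProdCore_iff {z : L.carrier × L.carrier} :
    z ∈ minProdCore E L g GD embV ↔ ∃ (φ φ' : C(ℝ, ℂ)) (ξ η : E.carrier), SmoothVan01 φ ∧
      (∀ t, HasDerivAt φ (φ' t) t) ∧ (ξ, η) ∈ GD ∧ z = M.prodPair g φ φ' ξ η := by
  constructor
  · rintro ⟨φ, ξ, η, hφ, hξ, rfl⟩
    lift φ to C(ℝ, ℂ) using hφ.1.1.continuous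
    obtain ⟨φ', hφ'⟩ := exists_hasDerivAt hφ.1.1
    exact ⟨φ, φ', ξ, η, hφ, hφ', hξ, (M.prodPair_eq hφ' ξ η).symm⟩
  · rintro ⟨φ, φ', ξ, η, hφ, hφ', hξ, rfl⟩
    exact ⟨φ, ξ, η, hφ, hξ, M.prodPair_eq hφ' ξ η⟩

lemma mem_maxProdCore_iff {z : L.carrier × L.carrier} :
    z ∈ maxProdCore E L g GD embV ↔ ∃ (φ φ' : C(ℝ, ℂ)) (ξ η : E.carrier), ContDiff ℝ ∞ φ ∧
      (∀ t, HasDerivAt φ (φ' t) t) ∧ (ξ, η) ∈ adjointGraph E E GD ∧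
      z = M.prodPair g φ φ' ξ η := by
  constructor
  · rintro ⟨φ, ξ, η, hφ, hξ, rfl⟩
    lift φ to C(ℝ, ℂ) using hφ.continuous
    obtain ⟨φ', hφ'⟩ := exists_hasDerivAt hφ
    exact ⟨φ, φ', ξ, η, hφ, hφ', hξ, (M.prodPair_eq hφ' ξ η).symm⟩
  · rintro ⟨φ, φ', ξ, η, hφ, hφ', hξ, rfl⟩
    exact ⟨φ, ξ, η, hφ, hξ, M.prodPair_eq hφ' ξ η⟩

lemma prodPair_mem_adjointGraph (hodd : ∀ p ∈ GD, (g.γ.toFun p.1, -(g.γ.toFun p.2)) ∈ GD)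
    {ψ ψ' : C(ℝ, ℂ)} (hψ : ∀ t, HasDerivAt ψ (ψ' t) t) {ξ η : E.carrier}
    (hξ : (ξ, η) ∈ adjointGraph E E GD) :
    M.prodPair g ψ ψ' ξ η ∈ adjointGraph L L (minProdCore E L g GD embV) := by
  intro p hp
  obtain ⟨φ, φ', x, y, ⟨⟨-, ε, hε, hleft⟩, δ, hδ, hright⟩, hφ, hxy, rfl⟩ :=
    M.mem_minProdCore_iff.1 hp
  have hparts := integral_conj_deriv_mul hφ hψ (hleft 0 hε.le) (hright 1 (by linarith))
  have hadj : E.inner y (g.γ.toFun ξ) = -E.inner x (g.γ.toFun η) := by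
    rw [odd_adjointGraph hodd hξ _ hxy, HilbMod.inner_neg_right]
  simp only [prodPair, HilbMod.inner_smul_left, L.inner_smul_right, HilbMod.inner_add_left,
    L.inner_add_right, inner_tmul, g.inner_γ_left, hadj, hparts, Complex.conj_I]
  module

include M in
lemma maxProdGraph_subset_adjointGraph
    (hodd : ∀ p ∈ GD, (g.γ.toFun p.1, -(g.γ.toFun p.2)) ∈ GD) :
    (maxProdGraph E L g GD embV : Set (L.carrier × L.carrier)) ⊆
      adjointGraph L L (minProdGraph E L g GD embV) := by
  refine closure_span_subset_adjointGraph_closure_span fun q hq => ?_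
  obtain ⟨ψ, ψ', ξ, η, -, hψ, hξ, rfl⟩ := M.mem_maxProdCore_iff.1 hq
  exact M.prodPair_mem_adjointGraph hodd hψ hξ

include M in
lemma smulB_mem_minProdGraph (hinv : ∀ p ∈ GD, ∀ b : B, (E.smulB p.1 b, E.smulB p.2 b) ∈ GD)
    (p : L.carrier × L.carrier) (hp : p ∈ minProdGraph E L g GD embV) (b : B) :
    (L.smulB p.1 b, L.smulB p.2 b) ∈ minProdGraph E L g GD embV := by
  refine smulB_mem_closure_span (fun q hq b => ?_) hp b
  obtain ⟨φ, φ', ξ, η, hφ, hφ', hξ, rfl⟩ := M.mem_minProdCore_iff.1 hq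
  refine M.mem_minProdCore_iff.2 ⟨φ, φ', _, _, hφ, hφ', hinv _ hξ b, ?_⟩
  simp only [prodPair, g.γ.map_smulB, tmul_smulB, L.smul_smulB, L.add_smulB]

lemma prodPair_mem_maxProdGraph {φ φ' : C(ℝ, ℂ)} (hφ : ContDiff ℝ ∞ φ)
    (hφ' : ∀ t, HasDerivAt φ (φ' t) t) {ξ η : E.carrier} (hξ : (ξ, η) ∈ adjointGraph E E GD) :
    M.prodPair g φ φ' ξ η ∈ maxProdGraph E L g GD embV :=
  Submodule.le_topologicalClosure _ <| Submodule.subset_span <|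
    M.mem_maxProdCore_iff.2 ⟨φ, φ', ξ, η, hφ, hφ', hξ, rfl⟩

lemma prodPair_mem_minProdGraph_of_smoothVan01 {φ φ' : C(ℝ, ℂ)} (hφ : SmoothVan01 φ)
    (hφ' : ∀ t, HasDerivAt φ (φ' t) t) {ξ η : E.carrier} (hξ : (ξ, η) ∈ GD) :
    M.prodPair g φ φ' ξ η ∈ minProdGraph E L g GD embV :=
  Submodule.le_topologicalClosure _ <| Submodule.subset_span <|
    M.mem_minProdCore_iff.2 ⟨φ, φ', ξ, η, hφ, hφ', hξ, rfl⟩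

lemma prodPair_mem_minProdGraph_of_eq_zero {ψ ψ' : C(ℝ, ℂ)} (hψ : ContDiff ℝ ∞ ψ)
    (hψ' : ∀ t, HasDerivAt ψ (ψ' t) t) (h0 : ψ 0 = 0) (h1 : ψ 1 = 0) {ξ η : E.carrier}
    (hξ : (ξ, η) ∈ GD) : M.prodPair g ψ ψ' ξ η ∈ minProdGraph E L g GD embV := by
  obtain ⟨φ, φ', hφ, hφ', hlim, hlim'⟩ := exists_smoothVan01_boundedlyTendsto hψ hψ' h0 h1
  have htendsto : Tendsto (fun n => M.prodPair g (φ n) (φ' n) ξ η) atTop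
      (𝓝 (M.prodPair g ψ ψ' ξ η)) :=
    (M.tendsto_tmul hlim ξ).prodMk_nhds
      (((M.tendsto_tmul hlim _).add (M.tendsto_tmul hlim' _)).const_smul Complex.I)
  exact isClosed_minProdGraph.mem_of_tendsto htendsto
    (.of_forall fun n => M.prodPair_mem_minProdGraph_of_smoothVan01 (hφ n) (hφ' n) hξ)

include M in
theorem dense_gdom_minProdGraph (hGD : Dense (gdom GD)) :
    Dense (gdom (minProdGraph E L g GD embV : Set (L.carrier × L.carrier))) := by
  let W := (minProdGraph E L g GD embV).map (LinearMap.fst ℂ L.carrier L.carrier)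
  refine (W.dense_iff_topologicalClosure_eq_top).2 <|
    M.eq_top_of_smoothVan01_tmul_mem W.isClosed_topologicalClosure hGD fun φ hφ ξ hξ => ?_
  obtain ⟨⟨ξ, η⟩, hξη, rfl⟩ := hξ
  obtain ⟨φ', hφ'⟩ := exists_hasDerivAt hφ.1.1
  exact W.le_topologicalClosure ⟨M.prodPair g φ φ' ξ η,
    M.prodPair_mem_minProdGraph_of_smoothVan01 hφ hφ' hξη, rfl⟩

-- For `ξ = (1 + n²π²) η + D*Dη`, the vector `x = sin (nπt) ⊗ η` satisfies the Dirichlet condition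
-- and `x + (D ⊠̂ ∂^min)* (D ⊠̂ ∂^min) x = sin (nπt) ⊗ ξ`.
theorem exists_sine_tmul_eq_add (hsym : IsSymmetricGraph E GD)
    (hreg : IsRegular E E GD) (hodd : ∀ p ∈ GD, (g.γ.toFun p.1, -(g.γ.toFun p.2)) ∈ GD)
    (n : ℤ) (ξ : E.carrier) :
    ∃ x y z, (x, y) ∈ minProdGraph E L g GD embV ∧ (y, z) ∈ maxProdGraph E L g GD embV ∧
      M.tmul (sine n) ξ = x + z := by
  obtain ⟨η, ζ, θ, hηζ, hζθ, rfl⟩ := hreg.exists_eq_smul_add M.innerSelfMono_left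
    (le_add_of_nonneg_right (sq_nonneg (n * π))) ξ
  have hmin := M.prodPair_mem_minProdGraph_of_eq_zero (g := g) (contDiff_sine n) (hasDerivAt_sine n)
    (sine_zero n) (sine_one n) hηζ
  have hsine := M.prodPair_mem_maxProdGraph (g := g) (contDiff_sine n) (hasDerivAt_sine n)
    (odd_adjointGraph hodd hζθ)
  have hcosine := M.prodPair_mem_maxProdGraph (g := g) (contDiff_cosine n) (hasDerivAt_cosine n)
    (hsym (hodd _ hηζ))
  refine ⟨_, _, M.tmul (sine n) ((n * π : ℂ) ^ 2 • η + θ), hmin, ?_, ?_⟩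
  · convert! add_mem (Submodule.smul_mem _ Complex.I hsine)
      (Submodule.smul_mem _ (Complex.I * (n * π)) hcosine) using 1
    simp only [prodPair, map_neg, g.invol, map_add, map_smul, LinearMap.smul_apply, Prod.smul_mk,
      Prod.mk_add_mk, smul_smul, smul_add]
    refine congrArg₂ _ rfl ?_
    linear_combination (norm := module)
      Complex.I_mul_I • ((n * π : ℂ) ^ 2 • M.tmul (sine n) η + M.tmul (sine n) θ)
  · simp only [map_add, map_smul, Complex.ofReal_add, Complex.ofReal_pow, Complex.ofReal_mul,
      Complex.ofReal_intCast, Complex.ofReal_one]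
    module

include M in
theorem dense_add_minProdGraph_maxProdGraph (hsym : IsSymmetricGraph E GD)
    (hreg : IsRegular E E GD) (hodd : ∀ p ∈ GD, (g.γ.toFun p.1, -(g.γ.toFun p.2)) ∈ GD) :
    Dense {w | ∃ x y z, (x, y) ∈ minProdGraph E L g GD embV ∧
      (y, z) ∈ maxProdGraph E L g GD embV ∧ w = x + z} := by
  let A := shiftedComp (minProdGraph E L g GD embV) (maxProdGraph E L g GD embV) 1
  have hrange : (A.range : Set L.carrier) =
      {w | ∃ x y z, (x, y) ∈ minProdGraph E L g GD embV ∧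
        (y, z) ∈ maxProdGraph E L g GD embV ∧ w = x + z} := by
    simpa only [one_smul, LinearMap.coe_range, ContinuousLinearMap.coe_coe] using
      range_shiftedComp _ _ (1 : ℂ)
  rw [← hrange, Submodule.dense_iff_topologicalClosure_eq_top]
  refine M.eq_top_of_sine_tmul_mem (Submodule.isClosed_topologicalClosure _) fun n ξ => ?_
  refine Submodule.le_topologicalClosure _ ?_
  rw [← SetLike.mem_coe, hrange]
  exact M.exists_sine_tmul_eq_add hsym hreg hodd n ξ

end IsIntervalTensor

end ExteriorProduct

end

/-- **Theorem.** If `D` is a symmetric regular operator on a Hilbert `B`-module `E`,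
then the graded exterior product `D ⊠̂ ∂^min_x` is a symmetric regular operator on
`E ⊗ L²[0,1]` whose adjoint is the closure of `D* ⊠̂ ∂^max_x`.

The exterior tensor product `E ⊗ L²[0,1]` is modelled by a Hilbert `B`-module `L`
together with a map `embV` sending a continuous `E`-valued function `h` on `[0,1]`
to the corresponding vector of `L`, satisfying `⟪embV h₁, embV h₂⟫ = ∫₀¹ ⟪h₁ t, h₂ t⟫ dt`,
and with total range; both operators are taken as the graph closures of their
restrictions to spans of elementary tensors. -/
theorem exterior_product_with_interval
    (E L : HilbMod B) (g : GradingOf E) (GD : Set (E.carrier × E.carrier))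
    -- `D` is symmetric and regular, odd for the grading `γ` of `E`
    (hsym : IsSymmetricGraph E GD) (hreg : IsRegular E E GD)
    (hodd : ∀ p ∈ GD, (g.γ.toFun p.1, -(g.γ.toFun p.2)) ∈ GD)
    -- `L` models `E ⊗ L²[0,1]` via `embV`
    (embV : (ℝ → E.carrier) → L.carrier)
    (embV_add : ∀ h₁ h₂ : ℝ → E.carrier, Continuous h₁ → Continuous h₂ →
      embV (h₁ + h₂) = embV h₁ + embV h₂)
    (embV_smul : ∀ (c : ℂ) (h : ℝ → E.carrier), Continuous h →
      embV (fun t => c • h t) = c • embV h)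
    (embV_smulB : ∀ (h : ℝ → E.carrier) (b : B), Continuous h →
      embV (fun t => E.smulB (h t) b) = L.smulB (embV h) b)
    (embV_inner : ∀ h₁ h₂ : ℝ → E.carrier, Continuous h₁ → Continuous h₂ →
      L.inner (embV h₁) (embV h₂) = ∫ t in (0:ℝ)..1, E.inner (h₁ t) (h₂ t))
    (embV_total : Dense {z : L.carrier | ∃ h : ℝ → E.carrier, Continuous h ∧ z = embV h}) :
    IsSymmetricGraph L
      (closure (Submodule.span ℂ (minProdCore E L g GD embV) : Set (L.carrier × L.carrier))) ∧
    IsRegular L L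
      (closure (Submodule.span ℂ (minProdCore E L g GD embV) : Set (L.carrier × L.carrier))) ∧
    adjointGraph L L
        (closure (Submodule.span ℂ (minProdCore E L g GD embV) : Set (L.carrier × L.carrier)))
      = closure (Submodule.span ℂ (maxProdCore E L g GD embV) : Set (L.carrier × L.carrier)) := by
  have M : IsIntervalTensor E L embV :=
    ⟨embV_add, embV_smul, embV_smulB, embV_inner, embV_total⟩
  have ⟨⟨⟨_, hinv, _⟩, _, hdom, _⟩, _⟩ := hreg
  exact isSymmetricGraph_isRegular_adjointGraph_eq
    (S := minProdGraph E L g GD embV) (T := maxProdGraph E L g GD embV) M.innerSelfMono_right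
    isClosed_minProdGraph isClosed_maxProdGraph (minProdGraph_le_maxProdGraph hsym)
    (M.smulB_mem_minProdGraph hinv) (M.maxProdGraph_subset_adjointGraph hodd)
    (M.dense_gdom_minProdGraph hdom) (M.dense_add_minProdGraph_maxProdGraph hsym hreg hodd)

end

end UKK
end

section
/- Let f ∈ C(S¹,ℝ) be a continuous nowhere differentiable function and define h : S¹ × S¹ → S¹ × S¹ by h(z,w) := (z, e^{if(z)}w). Then h is a homeomorphism, every Lipschitz function a on S¹ × S¹ (with its flat metric) such that a∘h is also Lipschitz satisfies a(z,w) = a(z,1) for all (z,w) — i.e. a is constant in the second variable — and consequently the subalgebra Lip(S¹×S¹) ∩ (h⁻¹)*Lip(S¹×S¹) = {a ∈ Lip(S¹×S¹) : a∘h ∈ Lip(S¹×S¹)} is not dense in C(S¹×S¹). In particular, for the spin Dirac operator D on the flat torus with pointwise multiplication representation π and π_h := π ∘ h*, the Lipschitz algebra Lip(π ⊕ π_h, D ⊕ D) is not dense in C(S¹×S¹), so the direct sum of the unbounded Fredholm modules (π, L²-spinors, D) and (π_h, L²-spinors, D) is not an unbounded Fredholm module for C(S¹×S¹). -/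
namespace UKK

noncomputable section

/-!
Let `a` and `a ∘ h` be Lipschitz. Comparing `a` at `(x, w)` and `(y, w)` with `a ∘ h` over `x` and
`y` shows that rotating the fibre over `x` by `f y - f x` moves `a` by at most a constant times
`dist x y`. Iterating this small rotation, one reaches any point of the fibre in about
`ℓ / (f y - f x)` steps, so the oscillation of `a` on the fibre times `|f y - f x|` is
`O(dist x y)`. If `a` is not constant on the fibre over `x₀`, this makes `f` Lipschitz near `x₀`,
and Rademacher's theorem yields a point where `f` is differentiable.
-/

section

open Filter Set
open scoped NNReal Topology

/-- A map that is Lipschitz on no neighbourhood of any point.  By Rademacher's theorem, nowhere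
differentiable functions are of this kind. -/
def NowhereLipschitz {X Y : Type*} [PseudoEMetricSpace X] [PseudoEMetricSpace Y] (f : X → Y) :
    Prop :=
  ∀ x, ∀ U ∈ 𝓝 x, ∀ K : ℝ≥0, ¬ LipschitzOnWith K f U

theorem exists_differentiableAt_of_lipschitzOnWith {E F : Type*}
    [NormedAddCommGroup E] [NormedSpace ℝ E] [FiniteDimensional ℝ E]
    [NormedAddCommGroup F] [NormedSpace ℝ F] [FiniteDimensional ℝ F]
    {g : E → F} {K : ℝ≥0} {x : E} {U : Set E} (hU : U ∈ 𝓝 x) (hg : LipschitzOnWith K g U) :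
    ∃ y, DifferentiableAt ℝ g y := by
  borelize E
  have hdense : Dense {y | y ∈ U → DifferentiableWithinAt ℝ g U y} :=
    MeasureTheory.Measure.dense_of_ae
      (hg.ae_differentiableWithinAt_of_mem (μ := MeasureTheory.Measure.addHaar))
  obtain ⟨y, hyU, hy⟩ :=
    hdense.inter_open_nonempty _ isOpen_interior ⟨x, mem_interior_iff_mem_nhds.2 hU⟩
  exact ⟨y, (hy (interior_subset hyU)).differentiableAt (mem_interior_iff_mem_nhds.1 hyU)⟩

theorem lipschitzWith_circleExp_mul (w : Circle) :
    LipschitzWith 1 fun t : ℝ ↦ Circle.exp t * w := by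
  obtain ⟨θ, rfl⟩ := Circle.exp_surjective w
  have hexp : LipschitzWith 1 Circle.exp := fun s t ↦ by
    simpa [circleMap] using! lipschitzWith_circleMap 0 1 s t
  simpa [Function.comp_def] using hexp.comp (LipschitzWith.id.add (LipschitzWith.const θ))

theorem nowhereLipschitz_of_not_exists_tendsto_slope {f : Circle → ℝ}
    (hf : ∀ z : Circle, ¬ ∃ L : ℝ,
      Tendsto (fun t : ℝ ↦ (f (z * Circle.exp t) - f z) / t) (𝓝[≠] 0) (𝓝 L)) :
    NowhereLipschitz f := by
  intro z U hU K hK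
  let γ : ℝ → Circle := fun t ↦ Circle.exp t * z
  have hγ : LipschitzWith 1 γ := lipschitzWith_circleExp_mul z
  have hγU : γ ⁻¹' U ∈ 𝓝 0 := hγ.continuous.continuousAt.preimage_mem_nhds (by simpa [γ] using hU)
  obtain ⟨s, hs⟩ := exists_differentiableAt_of_lipschitzOnWith hγU
    (hK.comp hγ.lipschitzOnWith (mapsTo_preimage γ U))
  refine hf (γ s) ⟨_, (hasDerivAt_iff_tendsto_slope_zero.1 hs.hasDerivAt).congr fun t ↦ ?_⟩
  simp only [Function.comp_apply, γ, Circle.exp_add, smul_eq_mul, div_eq_inv_mul,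
    mul_right_comm _ z]

/-- The homeomorphism `(x, w) ↦ (x, e^{i f(x)} w)` of `X × S¹`, rotating the circle over `x` by the
angle `f x`.  For `X = S¹` it is the map `h` of the proposition. -/
def skewRotation {X : Type*} [TopologicalSpace X] (f : C(X, ℝ)) : X × Circle ≃ₜ X × Circle where
  toFun p := (p.1, Circle.exp (f p.1) * p.2)
  invFun p := (p.1, Circle.exp (-f p.1) * p.2)
  left_inv p := by simp
  right_inv p := by simp

@[simp]
theorem skewRotation_apply {X : Type*} [TopologicalSpace X] (f : C(X, ℝ)) (p : X × Circle) :
    skewRotation f p = (p.1, Circle.exp (f p.1) * p.2) :=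
  rfl

/-- The multiples of `δ` are almost periods of `φ`, so `t + ℓ` may be replaced by `t + n * δ` with
`n = ⌊ℓ / δ⌋₊`. -/
theorem mul_dist_le_of_dist_shift_le {M : Type*} [PseudoMetricSpace M] {φ : ℝ → M} {K : ℝ≥0}
    {D δ ℓ : ℝ} (hφ : LipschitzWith K φ) (hshift : ∀ t, dist (φ t) (φ (t + δ)) ≤ D)
    (hδ : 0 ≤ δ) (hℓ : 0 ≤ ℓ) (t : ℝ) :
    δ * dist (φ t) (φ (t + ℓ)) ≤ ℓ * D + K * δ ^ 2 := by
  have hD : 0 ≤ D := dist_nonneg.trans (hshift 0)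
  obtain rfl | hδ := hδ.eq_or_lt
  · simpa using mul_nonneg hℓ hD
  set n := ⌊ℓ / δ⌋₊
  have hn_le : n * δ ≤ ℓ := (le_div_iff₀ hδ).1 (Nat.floor_le (by positivity))
  have hn_lt : ℓ < (n + 1) * δ := (div_lt_iff₀ hδ).1 (Nat.lt_floor_add_one _)
  have hmultiple : dist (φ t) (φ (t + n * δ)) ≤ n * D := by
    have hstep (k : ℕ) : dist (φ (t + k * δ)) (φ (t + (k + 1 : ℕ) * δ)) ≤ D := by
      convert hshift (t + k * δ) using 3
      push_cast
      ring
    simpa using dist_le_range_sum_of_dist_le (f := fun k : ℕ ↦ φ (t + k * δ)) n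
      fun {k} _ ↦ hstep k
  have hremainder : dist (φ (t + n * δ)) (φ (t + ℓ)) ≤ K * δ := by
    refine hφ.dist_le_mul_of_le ?_
    rw [dist_add_left, Real.dist_eq, abs_le]
    constructor <;> linarith
  calc δ * dist (φ t) (φ (t + ℓ))
      ≤ δ * (n * D + K * δ) := by
        gcongr
        exact (dist_triangle _ _ _).trans (add_le_add hmultiple hremainder)
    _ = (n * δ) * D + K * δ ^ 2 := by ring
    _ ≤ ℓ * D + K * δ ^ 2 := by gcongr

section Rigidity

variable {X M : Type*} [PseudoMetricSpace X] {f : C(X, ℝ)} {K₁ K₂ : ℝ≥0}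

section

variable [PseudoMetricSpace M] {a : X × Circle → M}

/-- Going from `x` to `y` along the fibre rotation and back horizontally rotates the fibre over `x`
by `f y - f x`. -/
theorem dist_rotate_le_of_lipschitzWith_comp_skewRotation (ha : LipschitzWith K₁ a)
    (hah : LipschitzWith K₂ (a ∘ skewRotation f)) (x y : X) (w : Circle) :
    dist (a (x, w)) (a (x, Circle.exp (f y - f x) * w)) ≤ (K₁ + K₂) * dist x y := by
  set v := Circle.exp (-f x) * w
  have hx : (a ∘ skewRotation f) (x, v) = a (x, w) := by simp [v]
  have hy : (a ∘ skewRotation f) (y, v) = a (y, Circle.exp (f y - f x) * w) := by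
    simp [v, div_eq_mul_inv, mul_assoc]
  have hskew := hah.dist_le_mul (x, v) (y, v)
  have hhoriz := ha.dist_le_mul (y, Circle.exp (f y - f x) * w) (x, Circle.exp (f y - f x) * w)
  rw [hx, hy, dist_prod_same_right] at hskew
  rw [dist_prod_same_right, dist_comm y x] at hhoriz
  calc dist (a (x, w)) (a (x, Circle.exp (f y - f x) * w))
      ≤ _ := dist_triangle _ _ _
    _ ≤ K₂ * dist x y + K₁ * dist x y := add_le_add hskew hhoriz
    _ = (K₁ + K₂) * dist x y := by ring

theorem mul_sub_le_of_lipschitzWith_comp_skewRotation (ha : LipschitzWith K₁ a)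
    (hah : LipschitzWith K₂ (a ∘ skewRotation f)) {x y : X} {w w' : Circle} {c : ℝ}
    (hc : c ≤ dist (a (x, w)) (a (x, w'))) (hxy : f x ≤ f y) (hclose : K₁ * (f y - f x) ≤ c / 2) :
    c * (f y - f x) ≤ 2 * w.angleDiff w' * (K₁ + K₂) * dist x y := by
  set δ := f y - f x
  have hδ : 0 ≤ δ := sub_nonneg.2 hxy
  have hfibre : LipschitzWith K₁ fun t : ℝ ↦ a (x, Circle.exp t * w) := by
    simpa using! ha.comp ((LipschitzWith.prodMk_left x).comp (lipschitzWith_circleExp_mul w))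
  have hshift (t : ℝ) : dist (a (x, Circle.exp t * w)) (a (x, Circle.exp (t + δ) * w)) ≤
      (K₁ + K₂) * dist x y := by
    rw [add_comm t δ, Circle.exp_add, mul_assoc]
    exact dist_rotate_le_of_lipschitzWith_comp_skewRotation ha hah x y (Circle.exp t * w)
  have hgap : δ * dist (a (x, w)) (a (x, w')) ≤
      w.angleDiff w' * ((K₁ + K₂) * dist x y) + K₁ * δ ^ 2 := by
    simpa [Circle.exp_angleDiff_mul] using
      mul_dist_le_of_dist_shift_le hfibre hshift hδ (w.angleDiff_nonneg w') 0
  linarith [mul_le_mul_of_nonneg_left hc hδ, mul_le_mul_of_nonneg_left hclose hδ]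

end

variable [MetricSpace M] {a : X × Circle → M}

theorem exists_lipschitzOnWith_of_lipschitzWith_comp_skewRotation (ha : LipschitzWith K₁ a)
    (hah : LipschitzWith K₂ (a ∘ skewRotation f)) {x₀ : X} {w w' : Circle}
    (hne : a (x₀, w) ≠ a (x₀, w')) : ∃ U ∈ 𝓝 x₀, ∃ K : ℝ≥0, LipschitzOnWith K f U := by
  obtain ⟨c, hc, hcgap⟩ := exists_between (dist_pos.2 hne)
  have hgap : ∀ᶠ x in 𝓝 x₀, c < dist (a (x, w)) (a (x, w')) :=
    have hcont : Continuous fun x ↦ dist (a (x, w)) (a (x, w')) := by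
      have := ha.continuous
      fun_prop
    hcont.continuousAt.eventually_const_lt hcgap
  have hclose : ∀ᶠ x in 𝓝 x₀, K₁ * |f x - f x₀| < c / 4 :=
    have hcont : Continuous fun x ↦ K₁ * |f x - f x₀| := by fun_prop
    hcont.continuousAt.eventually_lt_const (by simpa using hc)
  refine ⟨_, hgap.and hclose, (2 * w.angleDiff w' * (K₁ + K₂) / c).toNNReal,
    LipschitzOnWith.of_le_add_mul _ fun y hy x hx ↦ ?_⟩
  have hℓ := w.angleDiff_nonneg w'
  rw [Real.coe_toNNReal _ (by positivity), dist_comm]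
  obtain hyx | hxy := le_total (f y) (f x)
  · exact hyx.trans (le_add_of_nonneg_right (by positivity))
  have hK : K₁ * (f y - f x) ≤ c / 2 := by
    have htri : f y - f x ≤ |f y - f x₀| + |f x - f x₀| := by
      rw [abs_sub_comm (f x)]
      exact (le_abs_self _).trans (abs_sub_le _ _ _)
    linarith [mul_le_mul_of_nonneg_left htri K₁.coe_nonneg, hx.2, hy.2]
  rw [← sub_le_iff_le_add', div_mul_eq_mul_div, le_div_iff₀' hc]
  exact mul_sub_le_of_lipschitzWith_comp_skewRotation ha hah hx.1.le hxy hK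

theorem eq_of_lipschitzWith_comp_skewRotation (hf : NowhereLipschitz f) (ha : LipschitzWith K₁ a)
    (hah : LipschitzWith K₂ (a ∘ skewRotation f)) (x : X) (w w' : Circle) :
    a (x, w) = a (x, w') := by
  by_contra hne
  obtain ⟨U, hU, K, hK⟩ := exists_lipschitzOnWith_of_lipschitzWith_comp_skewRotation ha hah hne
  exact hf x U hU K hK

end Rigidity

theorem not_dense_of_forall_apply_eq {Y : Type*} [TopologicalSpace Y] {S : Set C(Y, ℂ)} {p q : Y}
    (hS : ∀ a ∈ S, a p = a q) {b : C(Y, ℂ)} (hb : b p ≠ b q) : ¬ Dense S := by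
  intro hdense
  have hclosed : IsClosed {a : C(Y, ℂ) | a p = a q} :=
    isClosed_eq (continuous_eval_const p) (continuous_eval_const q)
  exact hb (hclosed.closure_subset_iff.2 hS (hdense b))

/-- With `S = Lip(π, D)`, the set in the last conjunct is `Lip(π ⊕ π_h, D ⊕ D)`. -/
theorem lipschitz_pullback_counterexample_general {X : Type*} [PseudoMetricSpace X] [Nonempty X]
    (f : C(X, ℝ)) (hf : NowhereLipschitz f) (h : X × Circle → X × Circle)
    (hdef : ∀ p, h p = (p.1, Circle.exp (f p.1) * p.2)) :
    IsHomeomorph h ∧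
    (∀ a : X × Circle → ℂ, (∃ K, LipschitzWith K a) → (∃ K, LipschitzWith K (a ∘ h)) →
      ∀ x w, a (x, w) = a (x, 1)) ∧
    ∀ (hc : Continuous h) (S : Set C(X × Circle, ℂ)), (∀ a ∈ S, ∃ K, LipschitzWith K a) →
      ¬ Dense {a | a ∈ S ∧ a.comp ⟨h, hc⟩ ∈ S} := by
  obtain rfl : h = skewRotation f := funext hdef
  have hconst (a : X × Circle → ℂ) (ha : ∃ K, LipschitzWith K a)
      (hah : ∃ K, LipschitzWith K (a ∘ skewRotation f)) (x : X) (w : Circle) :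
      a (x, w) = a (x, 1) :=
    eq_of_lipschitzWith_comp_skewRotation hf ha.choose_spec hah.choose_spec x w 1
  refine ⟨(skewRotation f).isHomeomorph, hconst, fun hc S hS ↦ ?_⟩
  let x : X := Classical.arbitrary X
  let sndCoord : C(X × Circle, ℂ) := ⟨fun p ↦ p.2, by fun_prop⟩
  exact not_dense_of_forall_apply_eq (p := (x, -1)) (q := (x, 1)) (b := sndCoord)
    (fun a ha ↦ hconst a (hS a ha.1) (hS _ ha.2) x (-1))
    (Circle.coe_injective.ne (Circle.neg_ne_self 1))

end

/-- **Proposition (failure of direct sums without fixing the subalgebra).**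
Let `f ∈ C(S¹,ℝ)` be a nowhere differentiable function and define
`h : S¹ × S¹ → S¹ × S¹`, `h(z,w) = (z, e^{if(z)} w)`.  Then `h` is a homeomorphism;
every Lipschitz function `a` on `S¹ × S¹` such that `a ∘ h` is also Lipschitz is
constant in the second variable (`a(z,w) = a(z,1)`); consequently the subalgebra
`{a ∈ Lip(S¹×S¹) : a ∘ h ∈ Lip(S¹×S¹)}` is not dense in `C(S¹×S¹)`.  In particular,
for any unbounded Fredholm module `(π, H, D)` over `C(S¹×S¹)` whose Lipschitz
algebra is exactly the Lipschitz functions (e.g. the spin Dirac operator on the flat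
torus with the pointwise multiplication representation), the Lipschitz algebra
`Lip(π ⊕ π_h, D ⊕ D) = Lip(π,D) ∩ Lip(π_h,D)` is not dense in `C(S¹×S¹)`, so the
direct sum of the unbounded Fredholm modules `(π, H, D)` and `(π_h, H, D)` is not an
unbounded Fredholm module. -/
theorem lipschitz_pullback_counterexample
    (f : C(Circle, ℝ))
    (hf : ∀ z : Circle, ¬ ∃ L : ℝ,
      Filter.Tendsto (fun t : ℝ => (f (z * Circle.exp t) - f z) / t)
        (nhdsWithin 0 {(0 : ℝ)}ᶜ) (nhds L))
    (h : Circle × Circle → Circle × Circle)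
    (hdef : ∀ p : Circle × Circle, h p = (p.1, Circle.exp (f p.1) * p.2)) :
    -- (1) `h` is a homeomorphism
    IsHomeomorph h ∧
    -- (2) Lipschitz functions whose pullback along `h` is Lipschitz are constant in
    --     the second variable
    (∀ a : Circle × Circle → ℂ,
      (∃ K, LipschitzWith K a) → (∃ K, LipschitzWith K (a ∘ h)) →
      ∀ z w : Circle, a (z, w) = a (z, 1)) ∧
    -- (3) the algebra `Lip(S¹×S¹) ∩ (h⁻¹)* Lip(S¹×S¹)` is not dense in `C(S¹×S¹)`
    (¬ Dense {a : C(Circle × Circle, ℂ) |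
      (∃ K, LipschitzWith K ⇑a) ∧ (∃ K, LipschitzWith K (⇑a ∘ h))}) ∧
    -- (4) for any unbounded Fredholm module `(π, H, D)` over `C(S¹×S¹)` whose
    --     Lipschitz algebra consists exactly of the Lipschitz functions, the
    --     Lipschitz algebra of `(π ⊕ π∘h*, H ⊕ H, D ⊕ D)` is not dense
    (∀ (hc : Continuous h) (H : HilbMod ℂ) (π : RepOn C(Circle × Circle, ℂ) H)
      (GD : Set (H.carrier × H.carrier)),
      IsSelfAdjointGraph H GD → IsRegular H H GD →
      HasLocallyCompactResolvent H π GD →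
      (∀ a : C(Circle × Circle, ℂ), MemLip H GD (π.π a) ↔ ∃ K, LipschitzWith K ⇑a) →
      ¬ Dense {a : C(Circle × Circle, ℂ) |
        MemLip H GD (π.π a) ∧ MemLip H GD (π.π (a.comp ⟨h, hc⟩))}) := by
  obtain ⟨hhomeo, hconst, hdense⟩ := lipschitz_pullback_counterexample_general f
    (nowhereLipschitz_of_not_exists_tendsto_slope hf) h hdef
  exact ⟨hhomeo, hconst, hdense hhomeo.continuous _ fun _ ↦ id, fun hc H π GD _ _ _ hLip ↦
    hdense hc {a | MemLip H GD (π.π a)} fun a ↦ (hLip a).1⟩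

end

end UKK
end
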